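/- arXiv:1212.6498 — 3 statements merged into one kernel-verified Lean document; each statement's English description precedes it below -/
import Mathlib

section
/- Let X be a cosimplicial set and let C(X,M) = ⊕_q ℤX^q ⊗ M be the associated chain complex with coefficients in a ℤ-module M, with ℤX^q ⊗ M in degree −q and differential the alternating sum of the coface maps. Then the homology of C(X,M) is concentrated in degree 0, and H_0(C(X,M)) is a direct sum of one copy of M for each x ∈ X^0 with d^0 x = d^1 x. -/
/-!
STATEMENT 1: Let `X` be a cosimplicial set and `M` a `ℤ`-module.  The chain complex
`C(X,M) = ⊕_q ℤX^q ⊗ M` (with `ℤX^q ⊗ M ≅ (X^q →₀ M)` placed in degree `-q` and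
differential the alternating sum of the coface maps) has homology concentrated in
degree `0`, and `H_0(C(X,M))` is a direct sum of one copy of `M` for each
`x ∈ X^0` with `d^0 x = d^1 x`.
-/

open CategoryTheory

/-- The differential of the chain complex `C(X,M)`: the alternating sum of the maps
induced on `X^q →₀ M ≅ ℤX^q ⊗ M` by the coface maps `d^i = X.δ i`. -/
noncomputable def cosimpDiff (X : CosimplicialObject (Type)) (M : Type) [AddCommGroup M]
    (q : ℕ) :
    ((X.obj (SimplexCategory.mk q) →₀ M) →ₗ[ℤ]
      (X.obj (SimplexCategory.mk (q + 1)) →₀ M)) :=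
  ∑ i : Fin (q + 2), ((-1 : ℤ) ^ (i : ℕ)) • Finsupp.lmapDomain M ℤ (X.δ i)

namespace CosimplicialSet

variable (X : CosimplicialObject (Type))

section Identities

variable {X} {k : ℕ}

lemma δ_δ_apply {a b : ℕ} (hab : a ≤ b) (hb : b < k + 2) (x : X.obj (SimplexCategory.mk k)) :
    X.δ ⟨b + 1, by omega⟩ (X.δ ⟨a, by omega⟩ x) = X.δ ⟨a, by omega⟩ (X.δ ⟨b, hb⟩ x) :=
  ConcreteCategory.congr_hom (X.δ_comp_δ (i := ⟨a, by omega⟩) (j := ⟨b, hb⟩) hab) x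

lemma σ_δ_self_apply {a : ℕ} (ha : a < k + 1) (x : X.obj (SimplexCategory.mk k)) :
    X.σ ⟨a, ha⟩ (X.δ ⟨a, by omega⟩ x) = x :=
  ConcreteCategory.congr_hom (X.δ_comp_σ_self (i := ⟨a, ha⟩)) x

lemma σ_δ_succ_apply {a : ℕ} (ha : a < k + 1) (x : X.obj (SimplexCategory.mk k)) :
    X.σ ⟨a, ha⟩ (X.δ ⟨a + 1, by omega⟩ x) = x :=
  ConcreteCategory.congr_hom (X.δ_comp_σ_succ (i := ⟨a, ha⟩)) x

lemma σ_δ_apply_of_le {a b : ℕ} (hab : a ≤ b) (hb : b < k + 1)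
    (x : X.obj (SimplexCategory.mk (k + 1))) :
    X.σ ⟨b + 1, by omega⟩ (X.δ ⟨a, by omega⟩ x) = X.δ ⟨a, by omega⟩ (X.σ ⟨b, hb⟩ x) :=
  ConcreteCategory.congr_hom
    (X.δ_comp_σ_of_le (i := ⟨a, by omega⟩) (j := ⟨b, hb⟩) (by simpa using hab)) x

lemma σ_δ_apply_of_gt {a b : ℕ} (hab : b < a) (ha : a < k + 2)
    (x : X.obj (SimplexCategory.mk (k + 1))) :
    X.σ ⟨b, by omega⟩ (X.δ ⟨a + 1, by omega⟩ x) = X.δ ⟨a, ha⟩ (X.σ ⟨b, by omega⟩ x) :=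
  ConcreteCategory.congr_hom
    (X.δ_comp_σ_of_gt (i := ⟨a, ha⟩) (j := ⟨b, by omega⟩) (by simpa using hab)) x

end Identities

section LeadingCofaces

variable {X} {k : ℕ}

/-- `x` lies in the image of the coface map `d^a`. -/
def IsCoface (x : X.obj (SimplexCategory.mk (k + 1))) (a : ℕ) : Prop :=
  ∃ (ha : a < k + 2) (y : X.obj (SimplexCategory.mk k)), X.δ ⟨a, ha⟩ y = x

lemma exists_not_isCoface (x : X.obj (SimplexCategory.mk (k + 1))) : ∃ a, ¬ IsCoface x a :=
  ⟨k + 2, fun ⟨h, _⟩ => lt_irrefl _ h⟩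

open Classical in
/-- The number of consecutive coface maps `d^0, d^1, …` whose image contains `x`. -/
noncomputable def leading (x : X.obj (SimplexCategory.mk (k + 1))) : ℕ :=
  Nat.find (exists_not_isCoface x)

lemma isCoface_of_lt_leading {x : X.obj (SimplexCategory.mk (k + 1))} {a : ℕ}
    (ha : a < leading x) : IsCoface x a := by
  classical
  exact not_not.mp (Nat.find_min (exists_not_isCoface x) ha)

lemma not_isCoface_leading (x : X.obj (SimplexCategory.mk (k + 1))) :
    ¬ IsCoface x (leading x) := by
  classical
  exact Nat.find_spec (exists_not_isCoface x)

lemma leading_le (x : X.obj (SimplexCategory.mk (k + 1))) : leading x ≤ k + 2 := by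
  classical
  exact Nat.find_min' _ fun ⟨h, _⟩ => lt_irrefl _ h

lemma leading_eq {x : X.obj (SimplexCategory.mk (k + 1))} {n : ℕ}
    (h : ∀ a < n, IsCoface x a) (h' : ¬ IsCoface x n) : leading x = n := by
  classical
  exact (Nat.find_eq_iff _).mpr ⟨h', fun a ha => not_not.mpr (h a ha)⟩

lemma δ_eq_of_le_leading (x : X.obj (SimplexCategory.mk (k + 1))) (a : ℕ)
    (ha : a ≤ leading x) :
    X.δ ⟨a, by have := leading_le x; omega⟩ x = X.δ ⟨0, by omega⟩ x := by
  induction a with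
  | zero => rfl
  | succ a ih =>
    rw [← ih (by omega)]
    obtain ⟨hb, y, rfl⟩ := isCoface_of_lt_leading (x := x) (a := a) (by omega)
    exact δ_δ_apply le_rfl hb y

lemma δ_σ_eq_of_lt_leading (x : X.obj (SimplexCategory.mk (k + 1))) (a : ℕ)
    (ha : a < leading x) :
    X.δ ⟨a, by have := leading_le x; omega⟩ (X.σ ⟨0, by omega⟩ x) = x := by
  induction a with
  | zero =>
    obtain ⟨hb, y, hy⟩ := isCoface_of_lt_leading ha
    have hyx : X.σ ⟨0, by omega⟩ x = y := by rw [← hy, σ_δ_self_apply]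
    rw [hyx, hy]
  | succ a ih =>
    obtain ⟨hb, z, hz⟩ := isCoface_of_lt_leading ha
    have h := ih (by omega)
    have hyz : X.σ ⟨0, by omega⟩ x = z := by
      rw [← σ_δ_self_apply (a := a) (by omega) (X.σ ⟨0, by omega⟩ x), h,
        ← σ_δ_succ_apply (a := a) (by omega) z, hz]
    rw [hyz, hz]

/-- In positive degree, an element whose images under two consecutive cofaces `d^a`, `d^{a+1}`
agree lies in the image of `d^a`. -/
lemma isCoface_of_δ_eq_δ_succ {x : X.obj (SimplexCategory.mk (k + 1))} {a : ℕ}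
    (ha : a < k + 2) (h : X.δ ⟨a + 1, by omega⟩ x = X.δ ⟨a, by omega⟩ x) : IsCoface x a := by
  refine ⟨ha, ?_⟩
  rcases Nat.lt_or_ge a (k + 1) with hak | hak
  · refine ⟨X.σ ⟨a, hak⟩ x, ?_⟩
    rw [← σ_δ_apply_of_le le_rfl hak, ← h, σ_δ_self_apply]
  · obtain rfl : a = k + 1 := by omega
    refine ⟨X.σ ⟨k, by omega⟩ x, ?_⟩
    rw [← σ_δ_apply_of_gt (by omega) ha, h, σ_δ_succ_apply (a := k)]

lemma leading_δ_of_le (x : X.obj (SimplexCategory.mk (k + 1))) (a : ℕ) (ha : a < k + 3)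
    (hax : a ≤ leading x) : leading (X.δ ⟨a, ha⟩ x) = leading x + 1 := by
  have hle := leading_le x
  rw [δ_eq_of_le_leading x a hax]
  refine leading_eq (fun b hb => ⟨by omega, x, δ_eq_of_le_leading x b (by omega)⟩) ?_
  rintro ⟨hb, y, hy⟩
  apply not_isCoface_leading x
  rcases Nat.eq_zero_or_pos (leading x) with h0 | hpos
  · simp only [h0] at hy ⊢
    have hyx : y = x := by
      rw [← σ_δ_succ_apply (a := 0) (by omega) y, hy, σ_δ_self_apply]
    subst hyx
    exact isCoface_of_δ_eq_δ_succ (by omega) hy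
  · refine ⟨by omega, X.σ ⟨0, by omega⟩ y, ?_⟩
    rw [← σ_δ_apply_of_gt hpos, hy, σ_δ_self_apply]

lemma leading_δ_of_gt (x : X.obj (SimplexCategory.mk (k + 1))) (a : ℕ) (ha : a < k + 3)
    (hax : leading x < a) : leading (X.δ ⟨a, ha⟩ x) = leading x := by
  obtain ⟨a, rfl⟩ : ∃ b, a = b + 1 := ⟨a - 1, by omega⟩
  refine leading_eq (fun b hb => ?_) ?_
  · obtain ⟨hb', y, hy⟩ := isCoface_of_lt_leading hb
    refine ⟨by omega, X.δ ⟨a, by omega⟩ y, ?_⟩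
    rw [← δ_δ_apply (by omega) (by omega), hy]
  · rintro ⟨hb, y, hy⟩
    apply not_isCoface_leading x
    have hx : X.σ ⟨a, by omega⟩ (X.δ ⟨leading x, hb⟩ y) = x := by
      rw [hy, σ_δ_succ_apply]
    rcases Nat.lt_or_ge (leading x) a with hlt | hge
    · obtain ⟨c, rfl⟩ : ∃ c, a = c + 1 := ⟨a - 1, by omega⟩
      refine ⟨by omega, X.σ ⟨c, by omega⟩ y, ?_⟩
      rw [← σ_δ_apply_of_le (by omega), hx]
    · obtain rfl : a = leading x := by omega
      rw [σ_δ_self_apply] at hx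
      rw [hx] at hy
      exact isCoface_of_δ_eq_δ_succ (by omega) hy.symm

end LeadingCofaces

section Homotopy

variable (M : Type) [AddCommGroup M]

lemma sum_neg_one_pow_smul_ite {N n : ℕ} (hn : n ≤ N) (hodd : Odd n) (v : M) :
    ∑ i : Fin N, ((-1 : ℤ) ^ (i : ℕ)) • (if (i : ℕ) < n then v else 0) = v := by
  rw [Fin.sum_univ_eq_sum_range (fun i => ((-1 : ℤ) ^ i) • (if i < n then v else 0)) N,
    ← Finset.sum_subset (Finset.range_mono hn) (by
      intro i _ hi
      rw [if_neg (by simpa using hi), smul_zero]),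
    Finset.sum_congr rfl (fun i hi => by rw [if_pos (Finset.mem_range.mp hi)]),
    ← Finset.sum_smul, neg_one_geom_sum, if_neg (Nat.not_even_iff_odd.mpr hodd), one_smul]

lemma cosimpDiff_single (q : ℕ) (x : X.obj (SimplexCategory.mk q)) (m : M) :
    cosimpDiff X M q (Finsupp.single x m) =
      ∑ i : Fin (q + 2), ((-1 : ℤ) ^ (i : ℕ)) • Finsupp.single (X.δ i x) m := by
  simp [cosimpDiff, LinearMap.sum_apply, Finsupp.mapDomain_single]

open Classical in
/-- The contracting homotopy of `C(X,M)` in positive cosimplicial degrees: it sends `x` to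
`s^0 x` when the number of leading cofaces of `x` is odd, and to `0` otherwise. -/
noncomputable def homotopy (k : ℕ) :
    (X.obj (SimplexCategory.mk (k + 1)) →₀ M) →ₗ[ℤ] (X.obj (SimplexCategory.mk k) →₀ M) :=
  Finsupp.lsum ℤ fun x =>
    if Odd (leading x) then Finsupp.lsingle (X.σ ⟨0, by omega⟩ x) else 0

open Classical in
lemma homotopy_single (k : ℕ) (x : X.obj (SimplexCategory.mk (k + 1))) (m : M) :
    homotopy X M k (Finsupp.single x m) =
      if Odd (leading x) then Finsupp.single (X.σ ⟨0, by omega⟩ x) m else 0 := by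
  rw [homotopy, Finsupp.lsum_single]
  split_ifs <;> simp

lemma homotopy_cosimpDiff_single (k : ℕ) (x : X.obj (SimplexCategory.mk (k + 1))) (m : M) :
    cosimpDiff X M k (homotopy X M k (Finsupp.single x m)) +
      homotopy X M (k + 1) (cosimpDiff X M (k + 1) (Finsupp.single x m)) =
        Finsupp.single x m := by
  have hle := leading_le x
  rw [cosimpDiff_single, map_sum]
  simp only [map_smul, homotopy_single]
  by_cases hodd : Odd (leading x)
  · rw [if_pos hodd, cosimpDiff_single, Fin.sum_univ_succ (n := k + 2)]
    rw [if_neg (by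
      have := leading_δ_of_le x 0 (by omega) (by omega)
      exact fun h => Nat.not_even_iff_odd.mpr h (this ▸ hodd.add_one)), smul_zero, zero_add,
      ← Finset.sum_add_distrib]
    refine Eq.trans ?_ (sum_neg_one_pow_smul_ite _ hle hodd (Finsupp.single x m))
    refine Finset.sum_congr rfl fun i _ => ?_
    obtain ⟨i, hi⟩ := i
    simp only [Fin.succ_mk, pow_succ, mul_neg, mul_one, neg_smul]
    by_cases hin : i < leading x
    · rw [if_pos hin, leading_δ_of_le x (i + 1) (by omega) (by omega),
        if_neg (Nat.not_odd_iff_even.mpr hodd.add_one), smul_zero, neg_zero, add_zero,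
        δ_σ_eq_of_lt_leading x i hin]
    · have hpos := hodd.pos
      rw [if_neg hin, leading_δ_of_gt x (i + 1) (by omega) (by omega), if_pos hodd,
        σ_δ_apply_of_gt (by omega) hi, add_neg_cancel, smul_zero]
  · have heven := Nat.not_odd_iff_even.mp hodd
    rw [if_neg hodd, map_zero, zero_add]
    refine Eq.trans ?_ (sum_neg_one_pow_smul_ite (N := k + 3) _ (Nat.succ_le_succ hle)
      heven.add_one (Finsupp.single x m))
    refine Finset.sum_congr rfl fun i _ => ?_
    obtain ⟨i, hi⟩ := i
    by_cases hin : i ≤ leading x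
    · rw [leading_δ_of_le x i hi hin, if_pos heven.add_one, if_pos (Nat.lt_succ_of_le hin),
        δ_eq_of_le_leading x i hin, σ_δ_self_apply]
    · rw [leading_δ_of_gt x i hi (by omega), if_neg hodd, if_neg (by simpa using hin)]

lemma homotopy_cosimpDiff (k : ℕ) (f : X.obj (SimplexCategory.mk (k + 1)) →₀ M) :
    cosimpDiff X M k (homotopy X M k f) +
      homotopy X M (k + 1) (cosimpDiff X M (k + 1) f) = f := by
  induction f using Finsupp.induction_linear with
  | zero => simp
  | add f g hf hg =>
    simp only [map_add]
    rw [add_add_add_comm, hf, hg]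
  | single x m => exact homotopy_cosimpDiff_single X M k x m

end Homotopy

section Complex

variable (M : Type) [AddCommGroup M]

/-- The functor `S ↦ (S →₀ M)` from types to `ℤ`-modules. -/
noncomputable def finsuppFunctor : Type ⥤ ModuleCat ℤ where
  obj S := ModuleCat.of ℤ (S →₀ M)
  map f := ModuleCat.ofHom (Finsupp.lmapDomain M ℤ f)
  map_id S := by
    ext1
    exact Finsupp.lmapDomain_id M ℤ
  map_comp f g := by
    ext1
    exact Finsupp.lmapDomain_comp M ℤ f g

/-- The cosimplicial `ℤ`-module `q ↦ (X^q →₀ M)`. -/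
noncomputable def finsuppModule : CosimplicialObject (ModuleCat ℤ) :=
  ((CosimplicialObject.whiskering _ _).obj (finsuppFunctor M)).obj X

lemma cosimpDiff_comp (q : ℕ) : cosimpDiff X M (q + 1) ∘ₗ cosimpDiff X M q = 0 := by
  have key (n : ℕ) : cosimpDiff X M n =
      (AlgebraicTopology.AlternatingCofaceMapComplex.objD (finsuppModule X M) n).hom := by
    simp only [AlgebraicTopology.AlternatingCofaceMapComplex.objD, ModuleCat.hom_sum,
      ModuleCat.hom_zsmul]
    rfl
  rw [key, key]
  exact congrArg ModuleCat.Hom.hom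
    (AlgebraicTopology.AlternatingCofaceMapComplex.d_squared (finsuppModule X M) q)

lemma ker_cosimpDiff_succ (q : ℕ) :
    LinearMap.ker (cosimpDiff X M (q + 1)) = LinearMap.range (cosimpDiff X M q) := by
  refine le_antisymm (fun f hf => ⟨homotopy X M q f, ?_⟩)
    (LinearMap.range_le_ker_iff.mpr (cosimpDiff_comp X M q))
  simpa [LinearMap.mem_ker.mp hf] using homotopy_cosimpDiff X M q f

lemma ker_cosimpDiff_zero :
    LinearMap.ker (cosimpDiff X M 0) = Finsupp.supported M ℤ {x | X.δ 0 x = X.δ 1 x} := by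
  have hdiff (f) : cosimpDiff X M 0 f =
      Finsupp.mapDomain (X.δ 0) f - Finsupp.mapDomain (X.δ 1) f := by
    simp [cosimpDiff, Fin.sum_univ_two, sub_eq_add_neg]
  have h0 (x : X.obj (SimplexCategory.mk 0)) : X.σ ⟨0, by omega⟩ (X.δ 0 x) = x :=
    σ_δ_self_apply (a := 0) (by omega) x
  have h1 (x : X.obj (SimplexCategory.mk 0)) : X.σ ⟨0, by omega⟩ (X.δ 1 x) = x :=
    σ_δ_succ_apply (a := 0) (by omega) x
  ext f
  rw [LinearMap.mem_ker, hdiff, sub_eq_zero, Finsupp.mem_supported]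
  constructor
  · intro hf x hx
    by_contra hne
    refine Finsupp.mem_support_iff.mp hx ?_
    rw [← Finsupp.mapDomain_apply (Function.LeftInverse.injective h0) f x, hf]
    refine Finsupp.mapDomain_of_notMem_range _ _ ?_
    rintro ⟨y, hy⟩
    have hyx : y = x := by rw [← h1 y, hy, h0]
    exact hne (hyx ▸ hy).symm
  · exact fun hf => Finsupp.mapDomain_congr fun x hx => hf hx

end Complex

end CosimplicialSet

/-- The homology of `C(X,M)` vanishes in all degrees `-q` with `q ≥ 1` (exactness), and
in degree `0` it is isomorphic to the direct sum `⊕ M` over the set of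
`x ∈ X^0` with `d^0 x = d^1 x` (homology in degree `0` is the kernel of the first
differential, since nothing maps into degree `0`). -/
theorem cosimplicial_chainComplex_homology (X : CosimplicialObject (Type)) (M : Type)
    [AddCommGroup M] :
    (∀ q : ℕ,
        LinearMap.ker (cosimpDiff X M (q + 1)) = LinearMap.range (cosimpDiff X M q)) ∧
      Nonempty ((LinearMap.ker (cosimpDiff X M 0)) ≃ₗ[ℤ]
        ({x : X.obj (SimplexCategory.mk 0) // X.δ 0 x = X.δ 1 x} →₀ M)) := by
  exact ⟨CosimplicialSet.ker_cosimpDiff_succ X M,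
    ⟨(LinearEquiv.ofEq _ _ (CosimplicialSet.ker_cosimpDiff_zero X M)).trans
      (Finsupp.supportedEquivFinsupp _)⟩⟩
end

section
/- For any oriented 1-manifold X without boundary, the sets K(q+1, X) = π₀ Conf(q+1, X) of components of configuration spaces of q+1 ordered points in X form a cosimplicial set, with coface maps given by doubling a point (to its right for d^i, 0 ≤ i ≤ q, and doubling p_0 to its left for d^{q+1}) and codegeneracies given by forgetting a point; these maps satisfy the cosimplicial identities d^j d^i = d^i d^{j−1} for i<j, s^j d^i = d^i s^{j−1} for i<j, s^j d^j = id = s^j d^{j+1}, s^j d^i = d^{i−1} s^j for i>j+1, and s^j s^i = s^i s^{j+1} for i ≤ j. -/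
/-!
STATEMENT 4: For any oriented 1-manifold `X` without boundary (modelled as a disjoint
union of `b` oriented circles and `c` oriented open intervals), the sets
`K(q+1, X) = π₀ Conf(q+1, X)` of connected components of configuration spaces of `q+1`
ordered points in `X` form a cosimplicial set: there are coface maps given by doubling a
point (inserting a new point immediately to the right of `p_i` for `d^i`, `0 ≤ i ≤ q`,
and immediately to the left of `p_0` for `d^{q+1}`) and codegeneracies given by
forgetting a point, and these maps satisfy the cosimplicial identities.
-/

open Function

/-- An oriented 1-manifold without boundary: `b` oriented circles and `c` oriented open
intervals (lines). -/
abbrev OneMfld (b c : ℕ) : Type := (Fin b × Real.Angle) ⊕ (Fin c × ℝ)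

/-- The configuration space of `q` ordered distinct points in `X`. -/
abbrev Config (b c q : ℕ) : Type := {p : Fin q → OneMfld b c // Function.Injective p}

/-- `K(q, X) = π₀ Conf(q, X)`, the set of connected components of the configuration
space. -/
abbrev Kconf (b c q : ℕ) : Type := ConnectedComponents (Config b c q)

/-- `v` lies strictly between `u` and `w` in the positive direction: all three points lie
in the same component, and `v` is strictly between `u` and `w` for the circular order of
that circle, resp. the linear order of that line. -/
def SBtwn {b c : ℕ} : OneMfld b c → OneMfld b c → OneMfld b c → Prop
  | .inl (k, u), .inl (k', v), .inl (k'', w) => k = k' ∧ k' = k'' ∧ sbtw u v w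
  | .inr (k, u), .inr (k', v), .inr (k'', w) => k = k' ∧ k' = k'' ∧ u < v ∧ v < w
  | _, _, _ => False

/-- `x` is immediately after `u` in the positive (orientation) direction, relative to the
points of the configuration `S`: `x ≠ u`, both lie in the same component (and `u < x` if
that component is a line), and no point of `S` lies strictly between `u` and `x`. -/
def ImmAfter {b c q : ℕ} (S : Fin q → OneMfld b c) (u x : OneMfld b c) : Prop :=
  x ≠ u ∧ (∀ j, ¬ SBtwn u (S j) x) ∧
    (match u, x with
      | .inl (k, _), .inl (k', _) => k = k'
      | .inr (k, a), .inr (k', a') => k = k' ∧ a < a'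
      | _, _ => False)

noncomputable section

namespace OneMfld

variable {b c n : ℕ}

/-- Translation by `t` in the positive direction on every component. -/
def flow (t : ℝ) : OneMfld b c → OneMfld b c :=
  Sum.map (fun x => (x.1, x.2 + (t : Real.Angle))) (fun x => (x.1, x.2 + t))

@[simp]
theorem flow_zero (x : OneMfld b c) : flow 0 x = x := by
  rcases x with ⟨k, u⟩ | ⟨k, u⟩ <;> simp [flow]

theorem flow_flow (s t : ℝ) (x : OneMfld b c) : flow s (flow t x) = flow (s + t) x := by
  rcases x with ⟨k, u⟩ | ⟨k, u⟩ <;> simp [flow, add_assoc, add_comm s t]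

theorem eq_flow_sub {s t : ℝ} {x y : OneMfld b c} (h : flow s x = flow t y) :
    flow (s - t) x = y := by
  have := congrArg (flow (-t)) h
  rw [flow_flow, flow_flow, neg_add_cancel, flow_zero] at this
  rwa [sub_eq_neg_add]

theorem continuous_flow : Continuous fun z : ℝ × OneMfld b c => flow z.1 z.2 := by
  rw [← (Homeomorph.prodSumDistrib (X := ℝ) (Y := Fin b × Real.Angle)
    (Z := Fin c × ℝ)).symm.comp_continuous_iff']
  refine continuous_sum_dom.2 ⟨?_, ?_⟩
  · change Continuous fun z : ℝ × (Fin b × Real.Angle) =>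
      (Sum.inl (z.2.1, z.2.2 + (z.1 : Real.Angle)) : OneMfld b c)
    fun_prop
  · change Continuous fun z : ℝ × (Fin c × ℝ) => (Sum.inr (z.2.1, z.2.2 + z.1) : OneMfld b c)
    fun_prop

/-- An embedding of the 1-manifold as disjoint circles and lines in Euclidean space. -/
def embed : OneMfld b c → ℝ × ℝ × ℝ :=
  Sum.elim (fun x => ((x.1 : ℕ), x.2.cos, x.2.sin)) (fun x => (-1 - (x.1 : ℕ), x.2, 0))

theorem continuous_embed : Continuous (embed : OneMfld b c → ℝ × ℝ × ℝ) := by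
  have h (m : ℕ) (f : ℕ → ℝ) : Continuous fun k : Fin m => f k := continuous_of_discreteTopology
  refine Continuous.sumElim ?_ ?_
  · exact ((h b fun k => (k : ℝ)).comp continuous_fst).prodMk
      ((Real.Angle.continuous_cos.comp continuous_snd).prodMk
        (Real.Angle.continuous_sin.comp continuous_snd))
  · exact ((h c fun k => -1 - (k : ℝ)).comp continuous_fst).prodMk
      (continuous_snd.prodMk continuous_const)

theorem embed_injective : Injective (embed : OneMfld b c → ℝ × ℝ × ℝ) := by
  rintro (⟨k, u⟩ | ⟨k, u⟩) (⟨l, v⟩ | ⟨l, v⟩) h <;>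
    simp only [embed, Sum.elim_inl, Sum.elim_inr, Prod.mk.injEq] at h
  · obtain ⟨hk, hc, hs⟩ := h
    have hkl : k = l := Fin.ext (Nat.cast_injective hk)
    induction u using Real.Angle.induction_on
    induction v using Real.Angle.induction_on
    rw [hkl, Real.Angle.cos_sin_inj hc hs]
  · have := h.1
    have : (0 : ℝ) ≤ (k : ℕ) := by positivity
    have : (0 : ℝ) ≤ (l : ℕ) := by positivity
    linarith
  · have := h.1
    have : (0 : ℝ) ≤ (k : ℕ) := by positivity
    have : (0 : ℝ) ≤ (l : ℕ) := by positivity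
    linarith
  · obtain ⟨hk, hu, -⟩ := h
    have hkl : k = l := Fin.ext (by exact_mod_cast sub_right_injective hk)
    rw [hkl, hu]

theorem dist_embed_flow_le (t : ℝ) (x : OneMfld b c) :
    dist (embed x) (embed (flow t x)) ≤ |t| := by
  rcases x with ⟨k, u⟩ | ⟨k, u⟩
  · induction u using Real.Angle.induction_on with
    | h u =>
    have hc := Real.abs_cos_sub_cos_le u (u + t)
    have hs := Real.abs_sin_sub_sin_le u (u + t)
    simp only [sub_add_cancel_left, abs_neg] at hc hs
    simp only [embed, flow, Sum.map_inl, Sum.elim_inl, Prod.dist_eq, dist_self,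
      ← Real.Angle.coe_add, Real.Angle.cos_coe, Real.Angle.sin_coe, Real.dist_eq]
    exact max_le (abs_nonneg t) (max_le hc hs)
  · simp [embed, flow, Prod.dist_eq]

theorem eq_zero_of_flow_eq_self {t : ℝ} (ht : |t| ≤ 1) {x : OneMfld b c} (h : flow t x = x) :
    t = 0 := by
  rcases x with ⟨k, u⟩ | ⟨k, u⟩
  · simp only [flow, Sum.map_inl, Sum.inl.injEq, Prod.mk.injEq, add_eq_left, true_and] at h
    have hpi := Real.pi_gt_three
    have := abs_le.1 ht
    have hval : (t : Real.Angle).toReal = t :=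
      Real.Angle.toReal_coe_eq_self_iff.2 ⟨by linarith, by linarith⟩
    rw [← hval, h, Real.Angle.toReal_zero]
  · simpa [flow] using h

/-- The point `u + s` lies strictly between `u` and `u + t` on a circle. -/
theorem sbtw_add_coe {s t : ℝ} (hs : 0 < s) (hst : s < t) (ht : t < 2 * Real.pi)
    (u : Real.Angle) : sbtw u (u + (s : Real.Angle)) (u + (t : Real.Angle)) := by
  induction u using Real.Angle.induction_on with
  | h u =>
  rw [sbtw_iff_not_btw, ← Real.Angle.coe_add, ← Real.Angle.coe_add]
  have : Fact (0 < 2 * Real.pi) := ⟨Real.two_pi_pos⟩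
  intro h
  have h' := (QuotientAddGroup.btw_coe_iff (p := 2 * Real.pi)).1 h
  rw [(toIcoMod_eq_iff _ (c := u + s + 2 * Real.pi)).2
      ⟨⟨by linarith, by linarith⟩, -1, by simp⟩,
    (toIocMod_eq_iff _ (c := u + 2 * Real.pi)).2
      ⟨⟨by linarith, by linarith⟩, -1, by simp⟩] at h'
  linarith

theorem exists_pos_lt_two_pi_add_coe_eq {u x : Real.Angle} (h : x ≠ u) :
    ∃ t : ℝ, 0 < t ∧ t < 2 * Real.pi ∧ u + (t : Real.Angle) = x := by
  have hne : (x - u).toReal ≠ 0 := by simpa [sub_eq_zero] using h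
  have hlt := Real.Angle.neg_pi_lt_toReal (x - u)
  have hle := Real.Angle.toReal_le_pi (x - u)
  have hpi := Real.pi_pos
  rcases hne.lt_or_gt with h0 | h0
  · exact ⟨(x - u).toReal + 2 * Real.pi, by linarith, by linarith, by simp⟩
  · exact ⟨(x - u).toReal, h0, by linarith, by simp⟩

/-- A point immediately after `u` is reached from `u` along the flow without meeting the
configuration on the way. -/
theorem _root_.ImmAfter.exists_flow {S : Fin n → OneMfld b c} {u x : OneMfld b c}
    (h : ImmAfter S u x) :
    ∃ t : ℝ, 0 < t ∧ flow t u = x ∧ ∀ s, 0 < s → s < t → ∀ j, flow s u ≠ S j := by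
  obtain ⟨hne, hS, hux⟩ := h
  rcases u with ⟨k, u⟩ | ⟨k, u⟩ <;> rcases x with ⟨l, x⟩ | ⟨l, x⟩ <;> simp only at hux
  · subst hux
    have hxu : x ≠ u := fun h => hne (by rw [h])
    obtain ⟨t, ht0, ht, rfl⟩ := exists_pos_lt_two_pi_add_coe_eq hxu
    refine ⟨t, ht0, rfl, fun s hs hst j hj => hS j ?_⟩
    rw [← hj]
    exact ⟨rfl, rfl, sbtw_add_coe hs hst ht u⟩
  · obtain ⟨rfl, hlt⟩ := hux
    refine ⟨x - u, sub_pos.2 hlt, by simp [flow], fun s hs hst j hj => hS j ?_⟩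
    rw [← hj]
    exact ⟨rfl, rfl, by simpa using hs, by linarith⟩

/-- A third of the least distance between points of the configuration, truncated at `1 / 3`. -/
def spacing (p : Fin (n + 1) → OneMfld b c) : ℝ :=
  (Finset.univ.inf' Finset.univ_nonempty fun a : Fin (n + 1) × Fin (n + 1) =>
    if a.1 = a.2 then 1 else dist (embed (p a.1)) (embed (p a.2))) / 3

theorem continuous_spacing :
    Continuous (spacing : (Fin (n + 1) → OneMfld b c) → ℝ) := by
  refine (Continuous.finset_inf'_apply _ fun a _ => ?_).div_const 3
  split_ifs
  · exact continuous_const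
  · exact (continuous_embed.comp (continuous_apply a.1)).dist
      (continuous_embed.comp (continuous_apply a.2))

theorem spacing_pos {p : Fin (n + 1) → OneMfld b c} (hp : Injective p) : 0 < spacing p := by
  refine div_pos ((Finset.lt_inf'_iff _).2 fun a _ => ?_) three_pos
  split_ifs with h
  · exact one_pos
  · exact dist_pos.2 fun h' => h (hp (embed_injective h'))

theorem three_mul_spacing_le_one (p : Fin (n + 1) → OneMfld b c) : 3 * spacing p ≤ 1 := by
  rw [spacing, mul_div_cancel₀ _ three_ne_zero]
  exact (Finset.inf'_le _ (Finset.mem_univ (0, 0))).trans_eq (if_pos rfl)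

theorem three_mul_spacing_le_dist (p : Fin (n + 1) → OneMfld b c) {i j : Fin (n + 1)}
    (h : i ≠ j) : 3 * spacing p ≤ dist (embed (p i)) (embed (p j)) := by
  rw [spacing, mul_div_cancel₀ _ three_ne_zero]
  exact (Finset.inf'_le _ (Finset.mem_univ (i, j))).trans_eq (if_neg h)

/-- The flow does not carry a point of the configuration back to the configuration within
time `2 * spacing p`. -/
theorem eq_of_flow_eq {p : Fin (n + 1) → OneMfld b c} (hp : Injective p) {t : ℝ}
    (ht : |t| ≤ 2 * spacing p) {i j : Fin (n + 1)} (h : flow t (p i) = p j) :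
    i = j ∧ t = 0 := by
  have hpos := spacing_pos hp
  by_cases hij : i = j
  · subst hij
    exact ⟨rfl, eq_zero_of_flow_eq_self (by linarith [three_mul_spacing_le_one p]) h⟩
  · have h₁ := three_mul_spacing_le_dist p hij
    have h₂ := dist_embed_flow_le t (p i)
    rw [h] at h₂
    linarith

theorem insertNth_injective {p : Fin n → OneMfld b c} (hp : Injective p) (k : Fin (n + 1))
    {y : OneMfld b c} (hy : ∀ j, y ≠ p j) :
    Injective (Fin.insertNth (α := fun _ => OneMfld b c) k y p) := by
  intro a a'
  induction a using Fin.succAboveCases k with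
  | x =>
    induction a' using Fin.succAboveCases k with
    | x => simp
    | p a' => simpa using fun h => absurd h (hy a')
  | p a =>
    induction a' using Fin.succAboveCases k with
    | x => simpa using fun h => absurd h.symm (hy a)
    | p a' => simpa using fun h => hp h

/-- Configurations joined by a continuous family over an interval lie in the same component. -/
theorem mk_eq_mk_of_family {I : Set ℝ} (hI : I.OrdConnected)
    {f : ℝ → Fin n → OneMfld b c} (hf : Continuous f) (hinj : ∀ s ∈ I, Injective (f s))
    {p p' : Config b c n} {s t : ℝ} (hs : s ∈ I) (ht : t ∈ I) (hsp : f s = p.1)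
    (htp : f t = p'.1) : (ConnectedComponents.mk p : Kconf b c n) = ConnectedComponents.mk p' := by
  let g : I → Config b c n := fun s => ⟨f s, hinj s s.2⟩
  have hg : Continuous g := (hf.comp continuous_subtype_val).subtype_mk _
  have : PreconnectedSpace I := Subtype.preconnectedSpace hI.isPreconnected
  have hs' : g ⟨s, hs⟩ = p := Subtype.ext hsp
  have ht' : g ⟨t, ht⟩ = p' := Subtype.ext htp
  rw [← hs', ← ht', ConnectedComponents.coe_eq_coe']
  exact (isPreconnected_range hg).subset_connectedComponent ⟨_, rfl⟩ ⟨_, rfl⟩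

theorem flow_sign_ne {p : Fin (n + 1) → OneMfld b c} (hp : Injective p) {σ s : ℝ}
    (hσ : |σ| = 1) (hs : 0 < s) (hsp : s ≤ 2 * spacing p) (i j : Fin (n + 1)) :
    flow (σ * s) (p i) ≠ p j := by
  intro h
  have := (eq_of_flow_eq hp (by rwa [abs_mul, hσ, one_mul, abs_of_pos hs]) h).2
  rcases mul_eq_zero.1 this with h0 | h0
  · simp [h0] at hσ
  · exact hs.ne' h0

/-- Insert at position `k` a new point next to `p i`, on the side given by the sign `σ`. -/
def doubleAt (k : Fin (n + 2)) (i : Fin (n + 1)) {σ : ℝ} (hσ : |σ| = 1)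
    (p : Config b c (n + 1)) : Config b c (n + 2) :=
  ⟨Fin.insertNth (α := fun _ => OneMfld b c) k (flow (σ * spacing p.1) (p.1 i)) p.1,
    insertNth_injective p.2 k
      (flow_sign_ne p.2 hσ (spacing_pos p.2) (by linarith [spacing_pos p.2]) i)⟩

section doubleAt

variable (k : Fin (n + 2)) (i : Fin (n + 1)) {σ : ℝ} (hσ : |σ| = 1)

@[simp]
theorem doubleAt_same (p : Config b c (n + 1)) :
    (doubleAt k i hσ p).1 k = flow (σ * spacing p.1) (p.1 i) := by
  simp [doubleAt]

@[simp]
theorem doubleAt_succAbove (p : Config b c (n + 1)) (j : Fin (n + 1)) :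
    (doubleAt k i hσ p).1 (k.succAbove j) = p.1 j := by
  simp [doubleAt]

theorem continuous_doubleAt :
    Continuous (doubleAt k i hσ : Config b c (n + 1) → Config b c (n + 2)) := by
  refine Continuous.subtype_mk
    (Continuous.finInsertNth (A := fun _ => OneMfld b c) k ?_ continuous_subtype_val) _
  exact continuous_flow.comp
    (((continuous_spacing.comp continuous_subtype_val).const_mul σ).prodMk
      (continuous_pi_iff.1 continuous_subtype_val i))

theorem spacing_doubleAt_lt (p : Config b c (n + 1)) :
    spacing (doubleAt k i hσ p).1 < spacing p.1 := by
  have h₁ := three_mul_spacing_le_dist (doubleAt k i hσ p).1 (Fin.succAbove_ne k i)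
  have h₂ := dist_embed_flow_le (σ * spacing p.1) (p.1 i)
  have hpos := spacing_pos p.2
  rw [doubleAt_same, doubleAt_succAbove] at h₁
  rw [abs_mul, hσ, one_mul, abs_of_pos hpos] at h₂
  linarith

/-- The map induced by `doubleAt` on components. -/
def doubleMap : Kconf b c (n + 1) → Kconf b c (n + 2) :=
  (continuous_doubleAt k i hσ).connectedComponentsMap

theorem doubleMap_mk (p : Config b c (n + 1)) :
    doubleMap k i hσ (ConnectedComponents.mk p) = ConnectedComponents.mk (doubleAt k i hσ p) :=
  rfl

/-- Any insertion of a point reached from `p i` along the flow without meeting `p` represents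
the doubled component. -/
theorem doubleMap_mk_eq {p : Config b c (n + 1)} {p' : Config b c (n + 2)}
    (hp : ∀ j, p'.1 (k.succAbove j) = p.1 j) {t : ℝ} (ht : 0 < t)
    (hk : p'.1 k = flow (σ * t) (p.1 i))
    (hfree : ∀ s, 0 < s → s < t → ∀ j, flow (σ * s) (p.1 i) ≠ p.1 j) :
    doubleMap k i hσ (ConnectedComponents.mk p) = ConnectedComponents.mk p' := by
  have hpos := spacing_pos p.2
  refine mk_eq_mk_of_family (I := Set.Ioc 0 (max (spacing p.1) t)) Set.ordConnected_Ioc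
    (f := fun s => Fin.insertNth (α := fun _ => OneMfld b c) k (flow (σ * s) (p.1 i)) p.1)
    ?_ ?_ ⟨hpos, le_max_left _ _⟩ ⟨ht, le_max_right _ _⟩ rfl ?_
  · exact Continuous.finInsertNth k
      (continuous_flow.comp ((continuous_const_mul σ).prodMk continuous_const)) continuous_const
  · intro s hs
    refine insertNth_injective p.2 k fun j => ?_
    rcases le_max_iff.1 hs.2 with h | h
    · exact flow_sign_ne p.2 hσ hs.1 (by linarith) i j
    · rcases h.lt_or_eq with h | rfl
      · exact hfree s hs.1 h j
      · rw [← hk, ← hp]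
        exact p'.2.ne (Fin.succAbove_ne k j).symm
  · exact Fin.insertNth_eq_iff.2 ⟨hk.symm, funext fun j => (hp j).symm⟩

end doubleAt

/-- Forget the point at position `k`. -/
def forget (k : Fin (n + 1)) (p : Config b c (n + 1)) : Config b c n :=
  ⟨p.1 ∘ k.succAbove, p.2.comp Fin.succAbove_right_injective⟩

theorem continuous_forget (k : Fin (n + 1)) :
    Continuous (forget k : Config b c (n + 1) → Config b c n) :=
  Continuous.subtype_mk (continuous_pi fun j =>
    continuous_pi_iff.1 continuous_subtype_val (k.succAbove j)) _

/-- The map induced by `forget` on components. -/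
def forgetMap (k : Fin (n + 1)) : Kconf b c (n + 1) → Kconf b c n :=
  (continuous_forget k).connectedComponentsMap

theorem forgetMap_mk (k : Fin (n + 1)) (p : Config b c (n + 1)) :
    forgetMap k (ConnectedComponents.mk p) = ConnectedComponents.mk (forget k p) :=
  rfl

theorem forget_doubleAt (k : Fin (n + 2)) (i : Fin (n + 1)) {σ : ℝ} (hσ : |σ| = 1)
    (p : Config b c (n + 1)) : forget k (doubleAt k i hσ p) = p :=
  Subtype.ext (funext fun j => doubleAt_succAbove k i hσ p j)

theorem forgetMap_doubleMap_self (k : Fin (n + 2)) (i : Fin (n + 1)) {σ : ℝ} (hσ : |σ| = 1)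
    (x : Kconf b c (n + 1)) : forgetMap k (doubleMap k i hσ x) = x := by
  obtain ⟨p, rfl⟩ := ConnectedComponents.surjective_coe x
  rw [doubleMap_mk, forgetMap_mk, forget_doubleAt]

/-- Forgetting a point after doubling it amounts to moving it slightly. -/
theorem forgetMap_castSucc_doubleMap_succ (i : Fin (n + 1)) {σ : ℝ} (hσ : |σ| = 1)
    (x : Kconf b c (n + 1)) : forgetMap i.castSucc (doubleMap i.succ i hσ x) = x := by
  obtain ⟨p, rfl⟩ := ConnectedComponents.surjective_coe x
  have hpos := spacing_pos p.2
  rw [doubleMap_mk, forgetMap_mk]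
  refine mk_eq_mk_of_family (I := Set.Icc 0 (spacing p.1)) Set.ordConnected_Icc
    (f := fun s => update p.1 i (flow (σ * s) (p.1 i)))
    ?_ ?_ (Set.right_mem_Icc.2 hpos.le) (Set.left_mem_Icc.2 hpos.le) ?_ ?_
  · exact continuous_const.update i
      (continuous_flow.comp ((continuous_const_mul σ).prodMk continuous_const))
  · rintro s ⟨hs0, hs⟩
    rcases hs0.eq_or_lt with rfl | hs0
    · simpa using p.2
    · have hne (j) := flow_sign_ne p.2 hσ hs0 (by linarith) i j
      intro a a' h
      by_cases ha : a = i <;> by_cases ha' : a' = i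
      · rw [ha, ha']
      · subst ha
        rw [update_self, update_of_ne ha'] at h
        exact absurd h (hne a')
      · subst ha'
        rw [update_self, update_of_ne ha] at h
        exact absurd h.symm (hne a)
      · rw [update_of_ne ha, update_of_ne ha'] at h
        exact p.2 h
  · funext j
    by_cases hj : j = i
    · subst hj
      simp [forget]
    · have hij : i.castSucc.succAbove j = i.succ.succAbove j := by
        rcases lt_or_gt_of_ne hj with h | h
        · rw [Fin.succAbove_castSucc_of_lt _ _ h, Fin.succAbove_succ_of_le _ _ h.le]
        · rw [Fin.succAbove_castSucc_of_le _ _ h.le, Fin.succAbove_succ_of_lt _ _ h]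
      rw [update_of_ne hj]
      simp [forget, hij]
  · simp

/-- Forgetting a point commutes with doubling a different one. -/
theorem forgetMap_doubleMap {k k' : Fin (n + 3)} {i l l' : Fin (n + 2)} {i' : Fin (n + 1)}
    {σ : ℝ} (hσ : |σ| = 1) (hk : k'.succAbove l' = k) (hi : l.succAbove i' = i)
    (hcomm : ∀ m, k'.succAbove (l'.succAbove m) = k.succAbove (l.succAbove m))
    (x : Kconf b c (n + 2)) :
    forgetMap k' (doubleMap k i hσ x) = doubleMap l' i' hσ (forgetMap l x) := by
  obtain ⟨p, rfl⟩ := ConnectedComponents.surjective_coe x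
  have hpos := spacing_pos p.2
  rw [doubleMap_mk, forgetMap_mk, forgetMap_mk]
  refine (doubleMap_mk_eq l' i' hσ (fun j => ?_) hpos ?_ fun s hs hsp j => ?_).symm
  · simp [forget, hcomm]
  · simp [forget, hk, hi]
  · exact flow_sign_ne p.2 hσ hs (by linarith) _ _

/-- Doublings of different points, or of the same point on different sides, commute. -/
theorem doubleMap_doubleMap_comm {k k' : Fin (n + 3)} {i i' l l' : Fin (n + 2)}
    {m m' : Fin (n + 1)} {σ τ : ℝ} (hσ : |σ| = 1) (hτ : |τ| = 1)
    (hk : k'.succAbove l' = k) (hk' : k.succAbove l = k') (hi : l.succAbove m' = i)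
    (hi' : l'.succAbove m = i')
    (hcomm : ∀ j, k'.succAbove (l'.succAbove j) = k.succAbove (l.succAbove j))
    (hne : m = m' → σ ≠ τ) (x : Kconf b c (n + 1)) :
    doubleMap k i hτ (doubleMap l m hσ x) = doubleMap k' i' hσ (doubleMap l' m' hτ x) := by
  have hforget := forgetMap_doubleMap hτ hk hi hcomm (doubleMap l m hσ x)
  rw [forgetMap_doubleMap_self] at hforget
  rw [← hforget]
  obtain ⟨p, rfl⟩ := ConnectedComponents.surjective_coe x
  have hpos := spacing_pos p.2
  have hpos' := spacing_pos (doubleAt l m hσ p).2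
  have hlt := spacing_doubleAt_lt l m hσ p
  rw [doubleMap_mk, doubleMap_mk, forgetMap_mk]
  have hm : (forget k' (doubleAt k i hτ (doubleAt l m hσ p))).1 i' = p.1 m := by
    simp [forget, ← hi', hcomm]
  refine (doubleMap_mk_eq k' i' hσ (fun j => rfl) hpos ?_ fun s hs hsp j => ?_).symm
  · rw [hm, ← hk', doubleAt_succAbove, doubleAt_same]
  · rw [hm]
    induction j using Fin.succAboveCases l' with
    | x =>
      have hj : (forget k' (doubleAt k i hτ (doubleAt l m hσ p))).1 l' =
          flow (τ * spacing (doubleAt l m hσ p).1) (p.1 m') := by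
        simp [forget, hk, ← hi]
      rw [hj]
      intro h
      have habs : |σ * s - τ * spacing (doubleAt l m hσ p).1| ≤ 2 * spacing p.1 := by
        refine (abs_sub _ _).trans ?_
        rw [abs_mul, abs_mul, hσ, hτ, abs_of_pos hs, abs_of_pos hpos']
        linarith
      obtain ⟨hmm, heq⟩ := eq_of_flow_eq p.2 habs (eq_flow_sub h)
      have hst := congrArg abs (sub_eq_zero.1 heq)
      rw [abs_mul, abs_mul, hσ, hτ, abs_of_pos hs, abs_of_pos hpos', one_mul, one_mul] at hst
      rw [← hst, ← sub_mul] at heq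
      exact hne hmm (sub_eq_zero.1 ((mul_eq_zero.1 heq).resolve_right hs.ne'))
    | p j =>
      have hj : (forget k' (doubleAt k i hτ (doubleAt l m hσ p))).1 (l'.succAbove j) = p.1 j := by
        simp [forget, hcomm]
      rw [hj]
      exact flow_sign_ne p.2 hσ hs (by linarith) m j

/-- Doubling the new point and doubling the old point again give the same component. -/
theorem doubleMap_succ_doubleMap (i : Fin (n + 1)) {σ : ℝ} (hσ : |σ| = 1)
    (x : Kconf b c (n + 1)) :
    doubleMap i.succ.succ i.succ hσ (doubleMap i.succ i hσ x) =
      doubleMap i.castSucc.succ i.castSucc hσ (doubleMap i.succ i hσ x) := by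
  obtain ⟨p, rfl⟩ := ConnectedComponents.surjective_coe x
  have hpos := spacing_pos p.2
  have hpos' := spacing_pos (doubleAt i.succ i hσ p).2
  have hlt := spacing_doubleAt_lt i.succ i hσ p
  set ε := spacing p.1
  set δ := spacing (doubleAt i.succ i hσ p).1
  set r := doubleAt i.succ.succ i.succ hσ (doubleAt i.succ i hσ p) with hr
  have hnew : (forget i.castSucc.succ r).1 i.succ = flow (σ * (δ + ε)) (p.1 i) := by
    have : i.castSucc.succ.succAbove i.succ = i.succ.succ := by
      rw [Fin.succ_succAbove_succ, Fin.succAbove_castSucc_self]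
    simp [forget, this, hr, flow_flow, mul_add, ε, δ]
  have hold (j) : (forget i.castSucc.succ r).1 (i.succ.succAbove j) = p.1 j := by
    have : i.castSucc.succ.succAbove (i.succ.succAbove j) =
        i.succ.succ.succAbove (i.succ.succAbove j) := by
      simp only [Fin.succAbove, Fin.lt_def, Fin.ext_iff]
      grind
    simp [forget, this, hr]
  have hbase : (forget i.castSucc.succ r).1 i.castSucc = p.1 i := by
    simpa using hold i
  have hfirst : doubleMap i.succ i hσ (ConnectedComponents.mk p) =
      ConnectedComponents.mk (forget i.castSucc.succ r) :=
    doubleMap_mk_eq i.succ i hσ hold (add_pos hpos' hpos) hnew fun s hs hsp j =>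
      flow_sign_ne p.2 hσ hs (by linarith) i j
  conv_rhs => rw [hfirst]
  rw [doubleMap_mk, doubleMap_mk]
  refine (doubleMap_mk_eq _ _ hσ (fun j => rfl) hpos ?_ fun s hs hsp j => ?_).symm
  · have : i.castSucc.succ = i.succ.succ.succAbove i.succ := by
      rw [Fin.succ_succAbove_succ, Fin.succAbove_succ_self]
    rw [hbase, this, doubleAt_succAbove, doubleAt_same]
  · rw [hbase]
    induction j using Fin.succAboveCases i.succ with
    | x =>
      rw [hnew]
      intro h
      have h' := eq_flow_sub h.symm
      rw [← mul_sub] at h'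
      exact flow_sign_ne p.2 hσ (by linarith) (by linarith) i i h'
    | p j =>
      rw [hold]
      exact flow_sign_ne p.2 hσ hs (by linarith) i j

/-- Doubling a point twice on the same side, or first doubling it and then doubling the new
point on the opposite side, gives the same component. -/
theorem doubleMap_doubleMap_opposite {i : Fin (n + 1)} {k : Fin (n + 2)} {l : Fin (n + 3)}
    {i' : Fin (n + 2)} {σ τ : ℝ} (hσ : |σ| = 1)
    (hτ : |τ| = 1) (hστ : τ = -σ) (hi : k.succAbove i = i') (x : Kconf b c (n + 1)) :
    doubleMap l i' hσ (doubleMap k i hσ x) = doubleMap l k hτ (doubleMap k i hσ x) := by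
  obtain ⟨p, rfl⟩ := ConnectedComponents.surjective_coe x
  have hpos := spacing_pos p.2
  have hpos' := spacing_pos (doubleAt k i hσ p).2
  have hlt := spacing_doubleAt_lt k i hσ p
  subst hστ hi
  rw [doubleMap_mk, doubleMap_mk]
  refine (doubleMap_mk_eq l k hτ (fun j => doubleAt_succAbove _ _ _ _ j) (sub_pos.2 hlt) ?_
    fun s hs hsp j => ?_).symm
  · rw [doubleAt_same, doubleAt_same, doubleAt_succAbove, flow_flow]
    congr 1
    ring
  · rw [doubleAt_same, flow_flow]
    intro h
    have hs' : -σ * s + σ * spacing p.1 = σ * (spacing p.1 - s) := by ring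
    rw [hs'] at h
    induction j using Fin.succAboveCases k with
    | x =>
      rw [doubleAt_same] at h
      have h' := eq_flow_sub h.symm
      rw [← mul_sub] at h'
      exact flow_sign_ne p.2 hσ (by linarith) (by linarith) i i h'
    | p j =>
      rw [doubleAt_succAbove] at h
      exact flow_sign_ne p.2 hσ (by linarith) (by linarith) i j h

/-- The coface maps: double `p_i` to its right, respectively `p_0` to its left. -/
def coface (q : ℕ) (i : Fin (q + 2)) : Kconf b c (q + 1) → Kconf b c (q + 2) :=
  Fin.lastCases (motive := fun _ => Kconf b c (q + 1) → Kconf b c (q + 2))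
    (doubleMap (Fin.last (q + 1)) 0 (σ := -1) (by simp))
    (fun i => doubleMap i.succ i abs_one) i

theorem coface_castSucc (q : ℕ) (i : Fin (q + 1)) :
    (coface q i.castSucc : Kconf b c (q + 1) → _) = doubleMap i.succ i abs_one := by
  simp [coface]

theorem coface_last (q : ℕ) :
    (coface q (Fin.last (q + 1)) : Kconf b c (q + 1) → _) =
      doubleMap (Fin.last (q + 1)) 0 (σ := -1) (by simp) := by
  simp [coface]

theorem coface_coface (q : ℕ) (x : Kconf b c (q + 1)) (i j : Fin (q + 2)) (hij : i ≤ j) :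
    coface (q + 1) j.succ (coface q i x) = coface (q + 1) i.castSucc (coface q j x) := by
  induction j using Fin.lastCases with
  | last =>
    rw [Fin.succ_last, coface_last, coface_last, coface_castSucc]
    induction i using Fin.lastCases with
    | last =>
      rw [coface_last, Fin.succ_last]
      exact doubleMap_doubleMap_opposite _ _ (by simp) rfl x
    | cast i =>
      rw [coface_castSucc]
      refine doubleMap_doubleMap_comm (m' := 0) _ _ ?_ ?_ ?_ ?_ ?_ ?_ x <;>
        simp only [Fin.succAbove, Fin.lt_def, Fin.ext_iff] <;> grind
  | cast j =>
    induction i using Fin.lastCases with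
    | last => exact absurd hij (by simp)
    | cast i =>
      have hij' : i ≤ j := hij
      rw [Fin.succ_castSucc, coface_castSucc, coface_castSucc, coface_castSucc, coface_castSucc]
      rcases hij'.eq_or_lt with rfl | hlt
      · exact doubleMap_succ_doubleMap i abs_one x
      · refine doubleMap_doubleMap_comm _ _ ?_ ?_ ?_ ?_ ?_ ?_ x <;>
          simp only [Fin.succAbove, Fin.lt_def, Fin.ext_iff] <;> grind

theorem forgetMap_coface_of_le (q : ℕ) (x : Kconf b c (q + 2)) (i : Fin (q + 2))
    (j : Fin (q + 1)) (hij : i ≤ j.castSucc) :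
    forgetMap j.succ.succ (coface (q + 1) i.castSucc x) =
      coface q i (forgetMap j.succ x) := by
  induction i using Fin.lastCases with
  | last => exact absurd hij (by simp)
  | cast i =>
    rw [coface_castSucc, coface_castSucc]
    refine forgetMap_doubleMap _ ?_ ?_ ?_ x <;>
      simp only [Fin.succAbove, Fin.lt_def, Fin.ext_iff, Fin.le_def] at * <;> grind

theorem forgetMap_coface_of_lt (q : ℕ) (x : Kconf b c (q + 2)) (i : Fin (q + 2))
    (j : Fin (q + 1)) (hij : j.castSucc < i) :
    forgetMap j.castSucc.succ (coface (q + 1) i.succ x) =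
      coface q i (forgetMap j.succ x) := by
  induction i using Fin.lastCases with
  | last =>
    rw [Fin.succ_last, coface_last, coface_last]
    refine forgetMap_doubleMap _ ?_ ?_ ?_ x <;>
      simp only [Fin.succAbove, Fin.lt_def, Fin.ext_iff] at * <;> grind
  | cast i =>
    rw [Fin.succ_castSucc i, coface_castSucc, coface_castSucc]
    refine forgetMap_doubleMap _ ?_ ?_ ?_ x <;>
      simp only [Fin.succAbove, Fin.lt_def, Fin.ext_iff] at * <;> grind

theorem forgetMap_coface_castSucc (q : ℕ) (x : Kconf b c (q + 1)) (j : Fin (q + 1)) :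
    forgetMap j.succ (coface q j.castSucc x) = x := by
  rw [coface_castSucc, forgetMap_doubleMap_self]

theorem forgetMap_coface_succ (q : ℕ) (x : Kconf b c (q + 1)) (j : Fin (q + 1)) :
    forgetMap j.succ (coface q j.succ x) = x := by
  induction j using Fin.lastCases with
  | last => rw [Fin.succ_last, coface_last, forgetMap_doubleMap_self]
  | cast j =>
    rw [Fin.succ_castSucc, coface_castSucc, forgetMap_castSucc_doubleMap_succ]

theorem forgetMap_forgetMap (q : ℕ) (x : Kconf b c (q + 3)) (i j : Fin (q + 1)) (hij : i ≤ j) :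
    forgetMap j.succ (forgetMap i.castSucc.succ x) =
      forgetMap i.succ (forgetMap j.succ.succ x) := by
  obtain ⟨p, rfl⟩ := ConnectedComponents.surjective_coe x
  simp only [forgetMap_mk]
  congr 1
  refine Subtype.ext (funext fun m => congrArg p.1 ?_)
  simp only [Fin.succAbove, Fin.lt_def, Fin.ext_iff, Fin.le_def] at *
  grind

theorem coface_castSucc_mk_eq {q : ℕ} {i : Fin (q + 1)} {p : Config b c (q + 1)}
    {p' : Config b c (q + 2)} (hp : p'.1 ∘ Fin.succAbove i.succ = p.1)
    (h : ImmAfter p'.1 (p.1 i) (p'.1 i.succ)) :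
    coface q i.castSucc (ConnectedComponents.mk p) = ConnectedComponents.mk p' := by
  obtain ⟨t, ht, hflow, hfree⟩ := h.exists_flow
  rw [coface_castSucc]
  refine doubleMap_mk_eq _ _ _ (congrFun hp) ht (by rw [one_mul, hflow]) fun s hs hst j => ?_
  rw [one_mul, ← congrFun hp j]
  exact hfree s hs hst _

theorem coface_last_mk_eq {q : ℕ} {p : Config b c (q + 1)} {p' : Config b c (q + 2)}
    (hp : p'.1 ∘ Fin.castSucc = p.1) (h : ImmAfter p'.1 (p'.1 (Fin.last (q + 1))) (p.1 0)) :
    coface q (Fin.last (q + 1)) (ConnectedComponents.mk p) = ConnectedComponents.mk p' := by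
  obtain ⟨t, ht, hflow, hfree⟩ := h.exists_flow
  rw [coface_last]
  refine doubleMap_mk_eq _ _ _ (fun j => ?_) ht ?_ fun s hs hst j => ?_
  · rw [Fin.succAbove_last, ← hp, comp_apply]
  · rw [← hflow, flow_flow, neg_one_mul, neg_add_cancel, flow_zero]
  · rw [← hflow, flow_flow, neg_one_mul, neg_add_eq_sub, ← congrFun hp j]
    exact hfree _ (by linarith) (by linarith) _

end OneMfld

end

theorem configuration_components_form_cosimplicial_set (b c : ℕ) :
    ∃ (d : ∀ q : ℕ, Fin (q + 2) → Kconf b c (q + 1) → Kconf b c (q + 2))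
      (s : ∀ q : ℕ, Fin (q + 1) → Kconf b c (q + 2) → Kconf b c (q + 1)),
      -- `d^i` for `0 ≤ i ≤ q` doubles `p_i` to its right: if `p'` is obtained from `p`
      -- by inserting, at position `i+1`, a point immediately after `p_i`, then
      -- `d^i [p] = [p']`
      (∀ (q : ℕ) (i : Fin (q + 1)) (p : Config b c (q + 1)) (p' : Config b c (q + 2)),
          p'.1 ∘ Fin.succAbove (i.succ : Fin (q + 2)) = p.1 →
          ImmAfter p'.1 (p.1 i) (p'.1 (i.succ : Fin (q + 2))) →
          d q i.castSucc (ConnectedComponents.mk p) = ConnectedComponents.mk p') ∧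
      -- `d^{q+1}` doubles `p_0` to its left: the new point is appended as the last point
      -- of the configuration, immediately before `p_0`
      (∀ (q : ℕ) (p : Config b c (q + 1)) (p' : Config b c (q + 2)),
          p'.1 ∘ Fin.castSucc = p.1 →
          ImmAfter p'.1 (p'.1 (Fin.last (q + 1))) (p.1 0) →
          d q (Fin.last (q + 1)) (ConnectedComponents.mk p) = ConnectedComponents.mk p') ∧
      -- `s^j` forgets the point `p_{j+1}` (and relabels)
      (∀ (q : ℕ) (j : Fin (q + 1)) (p : Config b c (q + 2)),
          s q j (ConnectedComponents.mk p) =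
            ConnectedComponents.mk
              ⟨p.1 ∘ Fin.succAbove (j.succ : Fin (q + 2)),
                p.2.comp (Fin.succAbove_right_injective)⟩) ∧
      -- the cosimplicial identities:
      -- `d^j d^i = d^i d^{j-1}` for `i < j`
      (∀ (q : ℕ) (x : Kconf b c (q + 1)) (i j : Fin (q + 2)), i ≤ j →
          d (q + 1) j.succ (d q i x) = d (q + 1) i.castSucc (d q j x)) ∧
      -- `s^j d^i = d^i s^{j-1}` for `i < j`
      (∀ (q : ℕ) (x : Kconf b c (q + 2)) (i : Fin (q + 2)) (j : Fin (q + 1)),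
          i ≤ j.castSucc →
          s (q + 1) j.succ (d (q + 1) i.castSucc x) = d q i (s q j x)) ∧
      -- `s^j d^j = 1 = s^j d^{j+1}`
      (∀ (q : ℕ) (x : Kconf b c (q + 2)) (j : Fin (q + 2)),
          s (q + 1) j (d (q + 1) j.castSucc x) = x ∧
          s (q + 1) j (d (q + 1) j.succ x) = x) ∧
      -- `s^j d^i = d^{i-1} s^j` for `i > j + 1`
      (∀ (q : ℕ) (x : Kconf b c (q + 2)) (i : Fin (q + 2)) (j : Fin (q + 1)),
          j.castSucc < i →
          s (q + 1) j.castSucc (d (q + 1) i.succ x) = d q i (s q j x)) ∧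
      -- `s^j s^i = s^i s^{j+1}` for `i ≤ j`
      (∀ (q : ℕ) (x : Kconf b c (q + 3)) (i j : Fin (q + 1)), i ≤ j →
          s q j (s (q + 1) i.castSucc x) = s q i (s (q + 1) j.succ x)) := by
  open OneMfld in
  exact ⟨coface, fun q j => forgetMap j.succ,
    fun _ _ _ _ => coface_castSucc_mk_eq, fun _ _ _ => coface_last_mk_eq, fun _ _ _ => rfl,
    coface_coface, forgetMap_coface_of_le,
    fun q x j => ⟨forgetMap_coface_castSucc (q + 1) x j, forgetMap_coface_succ (q + 1) x j⟩,
    forgetMap_coface_of_lt, forgetMap_forgetMap⟩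
end

section
/- Let X be a disjoint union of b ≥ 0 circles and some number of open intervals. In the chain complex associated to the cosimplicial set K_c(•+1, X) of complete configurations (those meeting every circle component), the homology is concentrated in degree 0, and it is free of rank 1 if b = 1 and X has no interval components' contribution beyond that (i.e. there is exactly one configuration of a single point alone on its component, namely when b = 1), and the degree-0 homology has one generator for each single-point configuration x ∈ K_c(1,X) with d^0 x = d^1 x; in particular H_0 = 0 if b ≠ 1 when X consists only of circles. -/
/-!
STATEMENT 5: Let `X` be a disjoint union of `b ≥ 0` circles and `c` open intervals.  In
the chain complex associated to the cosimplicial set `K_c(•+1, X)` of complete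
configurations (components of configurations meeting every circle component of `X`), with
coface maps the "point doubling" maps, the homology is concentrated in degree 0; the
degree-0 homology has one generator for each single-point configuration
`x ∈ K_c(1,X)` with `d^0 x = d^1 x`; it is free of rank 1 if `X` consists of circles only
and `b = 1`, and it vanishes if `X` consists of circles only and `b ≠ 1`.
-/

open Function

/-- A component of the configuration space is *complete* if its configurations have at
least one point in each circle component of `X`. -/
def CompleteConf {b c q : ℕ} (x : Kconf b c q) : Prop :=
  ∃ p : Config b c q, ConnectedComponents.mk p = x ∧
    ∀ k : Fin b, ∃ j : Fin q, ∃ u : Real.Angle, p.1 j = Sum.inl (k, u)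

/-- Complete components. -/
abbrev KconfC (b c q : ℕ) : Type := {x : Kconf b c q // CompleteConf x}

/-- Given the doubling cofaces `d` (preserving completeness via `hd`), the differential
`d_K = ∑ (-1)^i d^i` of the chain complex of the cosimplicial set of complete
configurations, with `ℤ K_c(q+1,X)` in degree `-q`. -/
noncomputable def diffKc {b c : ℕ}
    (d : ∀ q : ℕ, Fin (q + 2) → Kconf b c (q + 1) → Kconf b c (q + 2))
    (hd : ∀ (q : ℕ) (i : Fin (q + 2)) (x : Kconf b c (q + 1)),
      CompleteConf x → CompleteConf (d q i x)) (q : ℕ) :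
    (KconfC b c (q + 1) →₀ ℤ) →ₗ[ℤ] (KconfC b c (q + 2) →₀ ℤ) :=
  ∑ i : Fin (q + 2), ((-1 : ℤ) ^ (i : ℕ)) •
    Finsupp.lmapDomain ℤ ℤ (fun x : KconfC b c (q + 1) => ⟨d q i x.1, hd q i x.1 x.2⟩)

section Abstract

/-- The alternating sum of the cofaces of a family of sets, extended linearly. -/
noncomputable def cofaceSum {C : ℕ → Type*} (δ : ∀ n, Fin (n + 2) → C n → C (n + 1)) (n : ℕ) :
    (C n →₀ ℤ) →ₗ[ℤ] (C (n + 1) →₀ ℤ) :=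
  ∑ i : Fin (n + 2), ((-1 : ℤ) ^ (i : ℕ)) • Finsupp.lmapDomain ℤ ℤ (δ n i)

/-- The properties of the cofaces of a cosimplicial set which determine the homology of the
associated complex. -/
structure CofaceSystem {C : ℕ → Type*} (δ : ∀ n, Fin (n + 2) → C n → C (n + 1)) : Prop where
  comm : ∀ n (i j : Fin (n + 2)), i ≤ j → ∀ x,
    δ (n + 1) j.succ (δ n i x) = δ (n + 1) i.castSucc (δ n j x)
  injective_zero : ∀ n, Injective (δ n 0)
  mem_range_zero : ∀ n (j : Fin (n + 2)) x,
    δ (n + 1) j.succ x ∈ Set.range (δ (n + 1) 0) → x ∈ Set.range (δ n 0)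
  eq_of_mem_range : ∀ x, δ 0 1 x ∈ Set.range (δ 0 0) → δ 0 0 x = δ 0 1 x

variable {C : ℕ → Type*} {δ : ∀ n, Fin (n + 2) → C n → C (n + 1)}

lemma cofaceSum_single (n : ℕ) (x : C n) :
    cofaceSum δ n (Finsupp.single x 1) =
      ∑ i : Fin (n + 2), ((-1 : ℤ) ^ (i : ℕ)) • Finsupp.single (δ n i x) 1 := by
  simp [cofaceSum, LinearMap.sum_apply]

lemma cofaceSum_single_eq_sub (n : ℕ) (x : C n) :
    cofaceSum δ n (Finsupp.single x 1) = Finsupp.single (δ n 0 x) 1 -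
      ∑ i : Fin (n + 1), ((-1 : ℤ) ^ (i : ℕ)) • Finsupp.single (δ n i.succ x) 1 := by
  rw [cofaceSum_single, Fin.sum_univ_succ, sub_eq_add_neg, ← Finset.sum_neg_distrib]
  simp [pow_succ]

variable (δ) in
/-- The parity of the number of times the zeroth coface can be stripped off an element, shifted
by one on the elements coming from degree-zero elements whose two cofaces agree. -/
def LeadingOdd : ∀ n, C n → Prop
  | 0, x => δ 0 0 x = δ 0 1 x
  | n + 1, x => ∃ z, δ n 0 z = x ∧ ¬ LeadingOdd n z

open Classical in
variable (δ) in
/-- The projection onto the elements of even parity. -/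
noncomputable def evenProj (n : ℕ) : (C n →₀ ℤ) →ₗ[ℤ] (C n →₀ ℤ) :=
  Finsupp.linearCombination ℤ fun x => if LeadingOdd δ n x then 0 else Finsupp.single x 1

open Classical in
variable (δ) in
/-- The contracting homotopy: strip off one zeroth coface from elements of odd parity. -/
noncomputable def stripHomotopy (n : ℕ) : (C (n + 1) →₀ ℤ) →ₗ[ℤ] (C n →₀ ℤ) :=
  Finsupp.linearCombination ℤ fun x =>
    if hx : ∃ z, δ n 0 z = x ∧ ¬ LeadingOdd δ n z then Finsupp.single hx.choose 1 else 0

lemma evenProj_of_odd {n : ℕ} {x : C n} (hx : LeadingOdd δ n x) :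
    evenProj δ n (Finsupp.single x 1) = 0 := by
  simp [evenProj, hx]

lemma evenProj_of_not_odd {n : ℕ} {x : C n} (hx : ¬ LeadingOdd δ n x) :
    evenProj δ n (Finsupp.single x 1) = Finsupp.single x 1 := by
  simp [evenProj, hx]

lemma not_leadingOdd_of_notMem {n : ℕ} {x : C (n + 1)} (hx : x ∉ Set.range (δ n 0)) :
    ¬ LeadingOdd δ (n + 1) x := by
  rintro ⟨z, hz, -⟩
  exact hx ⟨z, hz⟩

lemma stripHomotopy_of_notMem {n : ℕ} {x : C (n + 1)} (hx : x ∉ Set.range (δ n 0)) :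
    stripHomotopy δ n (Finsupp.single x 1) = 0 := by
  have : ¬ ∃ z, δ n 0 z = x ∧ ¬ LeadingOdd δ n z := not_leadingOdd_of_notMem hx
  simp [stripHomotopy, this]

namespace CofaceSystem

variable (H : CofaceSystem δ)
include H

lemma leadingOdd_zero_iff {n : ℕ} (z : C n) :
    LeadingOdd δ (n + 1) (δ n 0 z) ↔ ¬ LeadingOdd δ n z := by
  constructor
  · rintro ⟨w, hw, h⟩
    rwa [← H.injective_zero n hw]
  · exact fun h => ⟨z, rfl, h⟩

lemma stripHomotopy_zero {n : ℕ} (v : C n →₀ ℤ) :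
    stripHomotopy δ n (Finsupp.lmapDomain ℤ ℤ (δ n 0) v) = evenProj δ n v := by
  refine LinearMap.congr_fun (f := stripHomotopy δ n ∘ₗ Finsupp.lmapDomain ℤ ℤ (δ n 0))
    (g := evenProj δ n) ?_ v
  refine Finsupp.lhom_ext' fun z => LinearMap.ext_ring ?_
  by_cases hz : LeadingOdd δ n z
  · have h : ¬ ∃ w, δ n 0 w = δ n 0 z ∧ ¬ LeadingOdd δ n w :=
      fun h => (H.leadingOdd_zero_iff z).1 h hz
    simp [stripHomotopy, evenProj, hz, h]
  · have h : ∃ w, δ n 0 w = δ n 0 z ∧ ¬ LeadingOdd δ n w := ⟨z, rfl, hz⟩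
    have h' : h.choose = z := H.injective_zero n h.choose_spec.1
    simp [stripHomotopy, evenProj, hz, h, h']

lemma evenProj_zero {n : ℕ} (v : C n →₀ ℤ) :
    evenProj δ (n + 1) (Finsupp.lmapDomain ℤ ℤ (δ n 0) v) =
      Finsupp.lmapDomain ℤ ℤ (δ n 0) (v - evenProj δ n v) := by
  refine LinearMap.congr_fun (f := evenProj δ (n + 1) ∘ₗ Finsupp.lmapDomain ℤ ℤ (δ n 0))
    (g := Finsupp.lmapDomain ℤ ℤ (δ n 0) ∘ₗ (LinearMap.id - evenProj δ n)) ?_ v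
  refine Finsupp.lhom_ext' fun z => LinearMap.ext_ring ?_
  by_cases hz : LeadingOdd δ n z <;>
    simp [evenProj, hz, H.leadingOdd_zero_iff]

lemma cofaceSum_zero {n : ℕ} (v : C n →₀ ℤ) :
    cofaceSum δ (n + 1) (Finsupp.lmapDomain ℤ ℤ (δ n 0) v) =
      Finsupp.lmapDomain ℤ ℤ (δ (n + 1) 0)
        (Finsupp.lmapDomain ℤ ℤ (δ n 0) v - cofaceSum δ n v) := by
  refine LinearMap.congr_fun (f := cofaceSum δ (n + 1) ∘ₗ Finsupp.lmapDomain ℤ ℤ (δ n 0))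
    (g := Finsupp.lmapDomain ℤ ℤ (δ (n + 1) 0) ∘ₗ
      (Finsupp.lmapDomain ℤ ℤ (δ n 0) - cofaceSum δ n)) ?_ v
  refine Finsupp.lhom_ext' fun z => LinearMap.ext_ring ?_
  have h : ∀ j, δ (n + 1) j.succ (δ n 0 z) = δ (n + 1) 0 (δ n j z) := fun j =>
    H.comm n 0 j (Fin.zero_le j) z
  have e : ∀ y : C n, Finsupp.lmapDomain ℤ ℤ (δ n 0) (Finsupp.single y 1) =
      Finsupp.single (δ n 0 y) 1 := fun y => by simp
  simp only [LinearMap.comp_apply, LinearMap.sub_apply, Finsupp.lsingle_apply, e, map_sub]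
  rw [cofaceSum_single_eq_sub, cofaceSum_single, map_sum]
  simp [h]

lemma notMem_range_succ {n : ℕ} {z : C n} (hz : ¬ LeadingOdd δ n z)
    (hz' : ∀ m w, ⟨n, z⟩ ≠ (⟨m + 1, δ m 0 w⟩ : Σ n, C n)) (j : Fin (n + 1)) :
    δ n j.succ z ∉ Set.range (δ n 0) := by
  cases n with
  | zero =>
    intro h
    obtain rfl : j = 0 := Fin.fin_one_eq_zero j
    exact hz (H.eq_of_mem_range z h)
  | succ n =>
    intro h
    obtain ⟨w, hw⟩ := H.mem_range_zero n j z h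
    exact hz' n w (by rw [hw])

lemma cofaceSum_parity : ∀ (n : ℕ) (z : C n),
    (LeadingOdd δ n z → evenProj δ (n + 1) (cofaceSum δ n (Finsupp.single z 1)) = 0) ∧
    (¬ LeadingOdd δ n z → cofaceSum δ n (Finsupp.single z 1) -
      evenProj δ (n + 1) (cofaceSum δ n (Finsupp.single z 1)) =
        Finsupp.single (δ n 0 z) 1) := by
  have key : ∀ (n : ℕ) (z : C n), ¬ LeadingOdd δ n z →
      (∀ m w, ⟨n, z⟩ ≠ (⟨m + 1, δ m 0 w⟩ : Σ n, C n)) →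
      cofaceSum δ n (Finsupp.single z 1) -
        evenProj δ (n + 1) (cofaceSum δ n (Finsupp.single z 1)) =
          Finsupp.single (δ n 0 z) 1 := by
    intro n z hz hz'
    have h : ∀ j : Fin (n + 1), evenProj δ (n + 1) (Finsupp.single (δ n j.succ z) 1) =
        Finsupp.single (δ n j.succ z) 1 := fun j =>
      evenProj_of_not_odd (not_leadingOdd_of_notMem (H.notMem_range_succ hz hz' j))
    rw [cofaceSum_single_eq_sub, map_sub, evenProj_of_odd ((H.leadingOdd_zero_iff z).2 hz), map_sum]
    simp only [map_smul, h]
    abel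
  intro n
  induction n with
  | zero =>
    refine fun z => ⟨fun hz => ?_, fun hz => key 0 z hz fun m w h => ?_⟩
    · have h : δ 0 0 z = δ 0 1 z := hz
      rw [cofaceSum_single]
      simp [Fin.sum_univ_two, h]
    · simpa using congrArg Sigma.fst h
  | succ n ih =>
    intro z
    by_cases hz : z ∈ Set.range (δ n 0)
    · obtain ⟨w, rfl⟩ := hz
      have e : ∀ m (y : C m), Finsupp.single (δ m 0 y) (1 : ℤ) =
        Finsupp.lmapDomain ℤ ℤ (δ m 0) (Finsupp.single y 1) := fun m y => by simp
      rw [H.leadingOdd_zero_iff, not_not]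
      simp only [e]
      rw [H.cofaceSum_zero, H.evenProj_zero, map_sub (evenProj δ (n + 1)), H.evenProj_zero]
      refine ⟨fun hw => ?_, fun hw => ?_⟩
      · have := (ih w).2 hw
        rw [e] at this
        rw [evenProj_of_not_odd hw, sub_self, map_zero, ← this]
        simp
      · rw [evenProj_of_odd hw, sub_zero, (ih w).1 hw, sub_zero, ← map_sub]
        congr 1
        abel
    · have hz₁ := not_leadingOdd_of_notMem hz
      refine ⟨fun h => absurd h hz₁, fun _ => key _ z hz₁ fun m w h => ?_⟩
      obtain ⟨hm, h⟩ := Sigma.mk.inj_iff.1 h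
      obtain rfl : n = m := by omega
      exact hz ⟨w, (eq_of_heq h).symm⟩

lemma homotopy_succ (n : ℕ) (v : C (n + 1) →₀ ℤ) :
    cofaceSum δ n (stripHomotopy δ n v) + stripHomotopy δ (n + 1) (cofaceSum δ (n + 1) v) = v := by
  refine LinearMap.congr_fun (f := cofaceSum δ n ∘ₗ stripHomotopy δ n +
    stripHomotopy δ (n + 1) ∘ₗ cofaceSum δ (n + 1)) (g := LinearMap.id) ?_ v
  refine Finsupp.lhom_ext' fun x => LinearMap.ext_ring ?_
  simp only [LinearMap.comp_apply, LinearMap.add_apply, Finsupp.lsingle_apply, LinearMap.id_apply]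
  have e : ∀ m (y : C m), Finsupp.single (δ m 0 y) (1 : ℤ) =
    Finsupp.lmapDomain ℤ ℤ (δ m 0) (Finsupp.single y 1) := fun m y => by simp
  by_cases hx : x ∈ Set.range (δ n 0)
  · obtain ⟨z, rfl⟩ := hx
    rw [e, H.cofaceSum_zero, H.stripHomotopy_zero, H.stripHomotopy_zero, map_sub, H.evenProj_zero]
    by_cases hz : LeadingOdd δ n z
    · rw [(H.cofaceSum_parity n z).1 hz, evenProj_of_odd hz]
      simp
    · have := (H.cofaceSum_parity n z).2 hz
      rw [evenProj_of_not_odd hz, ← e, ← this]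
      simp [sub_eq_add_neg]
  · have hx₁ := not_leadingOdd_of_notMem hx
    have h : ∀ j : Fin (n + 2), stripHomotopy δ (n + 1)
        (Finsupp.single (δ (n + 1) j.succ x) 1) = 0 := fun j =>
      stripHomotopy_of_notMem fun h => hx (H.mem_range_zero n j x h)
    rw [stripHomotopy_of_notMem hx, cofaceSum_single_eq_sub, map_sub, map_sum, e,
      H.stripHomotopy_zero, evenProj_of_not_odd hx₁]
    simp only [map_smul, h]
    simp

lemma homotopy_zero (v : C 0 →₀ ℤ) :
    stripHomotopy δ 0 (cofaceSum δ 0 v) = evenProj δ 0 v := by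
  refine LinearMap.congr_fun (f := stripHomotopy δ 0 ∘ₗ cofaceSum δ 0) (g := evenProj δ 0) ?_ v
  refine Finsupp.lhom_ext' fun x => LinearMap.ext_ring ?_
  simp only [LinearMap.comp_apply, Finsupp.lsingle_apply]
  by_cases hx : LeadingOdd δ 0 x
  · have h : δ 0 0 x = δ 0 1 x := hx
    rw [evenProj_of_odd hx, cofaceSum_single]
    simp [Fin.sum_univ_two, h]
  · have h : δ 0 1 x ∉ Set.range (δ 0 0) := fun h => hx (H.eq_of_mem_range x h)
    have e : Finsupp.single (δ 0 0 x) (1 : ℤ) =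
      Finsupp.lmapDomain ℤ ℤ (δ 0 0) (Finsupp.single x 1) := by simp
    rw [cofaceSum_single, Fin.sum_univ_two, map_add, map_smul, map_smul,
      stripHomotopy_of_notMem h, e, H.stripHomotopy_zero]
    simp

lemma cofaceSum_cofaceSum (n : ℕ) (v : C n →₀ ℤ) :
    cofaceSum δ (n + 1) (cofaceSum δ n v) = 0 := by
  refine LinearMap.congr_fun (f := cofaceSum δ (n + 1) ∘ₗ cofaceSum δ n) (g := 0) ?_ v
  refine Finsupp.lhom_ext' fun x => LinearMap.ext_ring ?_
  simp only [LinearMap.comp_apply, Finsupp.lsingle_apply, LinearMap.zero_apply]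
  rw [cofaceSum_single, map_sum]
  simp only [map_smul, cofaceSum_single, Finset.smul_sum, smul_smul, ← pow_add]
  rw [← Finset.sum_product', ← Finset.sum_filter_add_sum_filter_not _
    (fun p : Fin (n + 2) × Fin (n + 3) => p.1.castSucc < p.2), add_eq_zero_iff_eq_neg,
    ← Finset.sum_neg_distrib]
  refine Finset.sum_bij'
    (fun p hp => (p.2.pred (Fin.ne_zero_of_lt (Finset.mem_filter.1 hp).2), p.1.castSucc))
    (fun p hp => (p.2.castLT (by
      have := (Finset.mem_filter.1 hp).2
      have := p.1.2
      simp only [Fin.lt_def, Fin.val_castSucc] at *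
      omega), p.1.succ)) ?_ ?_ ?_ ?_ ?_
  · rintro ⟨i, j⟩ hp
    simp only [Finset.mem_filter, Finset.mem_univ, true_and, Fin.lt_def,
      Fin.val_castSucc, Fin.val_pred, Finset.univ_product_univ] at hp ⊢
    omega
  · rintro ⟨i, j⟩ hp
    simp only [Finset.mem_filter, Finset.mem_univ, true_and, Fin.lt_def,
      Fin.val_castSucc, Fin.val_succ, Fin.val_castLT, Finset.univ_product_univ] at hp ⊢
    omega
  · rintro ⟨i, j⟩ hp
    simp
  · rintro ⟨i, j⟩ hp
    simp
  · rintro ⟨i, j⟩ hp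
    have hij := (Finset.mem_filter.1 hp).2
    obtain ⟨k, rfl⟩ := Fin.exists_succ_eq.2 (Fin.ne_zero_of_lt hij)
    have hik : i ≤ k := by
      simp only [Fin.lt_def, Fin.val_castSucc, Fin.val_succ, Fin.le_def] at *
      omega
    simp only [Fin.pred_succ, H.comm n i k hik x, Fin.val_succ, Fin.val_castSucc]
    rw [← neg_smul]
    congr 1
    ring

/-- The associated complex is exact in positive degrees. -/
theorem ker_eq_range (n : ℕ) :
    LinearMap.ker (cofaceSum δ (n + 1)) = LinearMap.range (cofaceSum δ n) := by
  ext v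
  constructor
  · intro hv
    have h := H.homotopy_succ n v
    rw [LinearMap.mem_ker.1 hv, map_zero, add_zero] at h
    exact ⟨_, h⟩
  · rintro ⟨w, rfl⟩
    exact H.cofaceSum_cofaceSum n w

/-- In degree zero, the cycles are spanned by the elements whose two cofaces agree. -/
theorem ker_zero_eq :
    LinearMap.ker (cofaceSum δ 0) = Finsupp.supported ℤ ℤ {x : C 0 | δ 0 0 x = δ 0 1 x} := by
  apply le_antisymm
  · intro v hv
    have h := H.homotopy_zero v
    rw [LinearMap.mem_ker.1 hv, map_zero] at h
    rw [Finsupp.mem_supported']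
    intro x hx
    have hp : ∀ w : C 0 →₀ ℤ, evenProj δ 0 w x = w x := by
      intro w
      induction w using Finsupp.induction_linear with
      | zero => simp
      | add f g hf hg => simp [hf, hg]
      | single y a =>
        rw [← mul_one a, ← smul_eq_mul, ← Finsupp.smul_single, map_smul]
        by_cases hy : LeadingOdd δ 0 y
        · have : y ≠ x := by
            rintro rfl
            exact hx hy
          simp [evenProj_of_odd hy, this]
        · rw [evenProj_of_not_odd hy]
    rw [← hp v, ← h, Finsupp.zero_apply]
  · rw [Finsupp.supported_eq_span_single, Submodule.span_le]
    rintro _ ⟨x, hx, rfl⟩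
    have h : δ 0 0 x = δ 0 1 x := hx
    rw [SetLike.mem_coe, LinearMap.mem_ker, cofaceSum_single]
    simp [Fin.sum_univ_two, h]

end CofaceSystem

end Abstract

section Geometry

open Real Topology Filter

lemma sbtw_coe_angle {α γ : ℝ} {v : Angle} (h : α < γ) (h' : γ < α + 2 * π)
    (hv : sbtw (α : Angle) v (γ : Angle)) : ∃ w : ℝ, α < w ∧ w < γ ∧ v = (w : Angle) := by
  induction v using Real.Angle.induction_on with
  | _ β =>
  have hp : 0 < 2 * π := two_pi_pos
  rw [sbtw_iff_not_btw] at hv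
  have hv' : ¬ toIcoMod hp γ β ≤ toIocMod hp γ α := fun h =>
    hv ((QuotientAddGroup.btw_coe_iff (hp' := ⟨hp⟩)).2 h)
  have e : toIocMod hp γ α = α + 2 * π := by
    rw [toIocMod_eq_iff]
    exact ⟨⟨by linarith, by linarith⟩, -1, by simp⟩
  rw [e, not_le] at hv'
  refine ⟨toIcoMod hp γ β - 2 * π, by linarith, ?_, ?_⟩
  · linarith [toIcoMod_lt_right hp γ β]
  · rw [Real.Angle.coe_sub, Real.Angle.coe_two_pi, sub_zero]
    rw [Real.Angle.angle_eq_iff_two_pi_dvd_sub]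
    refine ⟨toIcoDiv hp γ β, ?_⟩
    rw [self_sub_toIcoMod]
    simp [mul_comm]

variable {b c : ℕ}

/-- Translation of a point of a 1-manifold in the positive direction of its component. -/
noncomputable def shiftPt (t : ℝ) : OneMfld b c → OneMfld b c :=
  Sum.map (Prod.map id (· + (t : Angle))) (Prod.map id (· + t))

lemma shiftPt_zero (u : OneMfld b c) : shiftPt 0 u = u := by
  rcases u with ⟨k, u⟩ | ⟨k, u⟩ <;> simp [shiftPt]

lemma continuous_shiftPt (u : OneMfld b c) : Continuous fun t => shiftPt t u := by
  rcases u with ⟨k, u⟩ | ⟨k, u⟩ <;> simp only [shiftPt, Sum.map_inl, Sum.map_inr, Prod.map] <;>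
    fun_prop

lemma shiftPt_inj {u : OneMfld b c} {s t : ℝ} (hs : |s| < 1) (ht : |t| < 1)
    (h : shiftPt s u = shiftPt t u) : s = t := by
  rcases u with ⟨k, u⟩ | ⟨k, u⟩
  · simp only [shiftPt, Sum.map_inl, Prod.map, Sum.inl.injEq, Prod.mk.injEq, add_right_inj] at h
    obtain ⟨m, hm⟩ := Real.Angle.angle_eq_iff_two_pi_dvd_sub.1 h.2
    rw [abs_lt] at hs ht
    have hm0 : m = 0 := by
      have h1 : |2 * π * (m : ℝ)| < 2 * π := by
        rw [← hm, abs_lt]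
        constructor <;> linarith [pi_gt_three]
      rw [abs_mul, abs_of_pos two_pi_pos] at h1
      have h2 : |(m : ℝ)| < 1 := by
        by_contra h3
        nlinarith [two_pi_pos]
      exact Int.abs_lt_one_iff.1 (by exact_mod_cast h2)
    rw [hm0] at hm
    simp at hm
    linarith
  · simpa [shiftPt] using h

lemma exists_shiftPt_of_sBtwn {u v : OneMfld b c} {s t : ℝ} (hs : |s| < 1) (ht : |t| < 1)
    (hst : s < t) (h : SBtwn (shiftPt s u) v (shiftPt t u)) :
    ∃ r, s < r ∧ r < t ∧ v = shiftPt r u := by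
  rw [abs_lt] at hs ht
  rcases u with ⟨k, u⟩ | ⟨k, u⟩ <;> rcases v with ⟨l, v⟩ | ⟨l, v⟩ <;>
    simp only [shiftPt, Sum.map_inl, Sum.map_inr, Prod.map, id, SBtwn] at h ⊢
  · obtain ⟨rfl, -, h⟩ := h
    induction u using Real.Angle.induction_on with
    | _ x =>
    rw [← Real.Angle.coe_add, ← Real.Angle.coe_add] at h
    obtain ⟨w, h₁, h₂, rfl⟩ := sbtw_coe_angle (by linarith) (by linarith [pi_gt_three]) h
    exact ⟨w - x, by linarith, by linarith, by rw [← Real.Angle.coe_add]; simp⟩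
  · obtain ⟨rfl, -, h₁, h₂⟩ := h
    exact ⟨v - u, by linarith, by linarith, by simp⟩

/-- Disjoint neighbourhoods of the points of `p`, with oriented coordinates. -/
structure IsThickening {n : ℕ} (p : Fin n → OneMfld b c) (e : Fin n × ℝ → OneMfld b c) :
    Prop where
  injective : Injective e
  zero : ∀ i, e (i, 0) = p i
  immAfter : ∀ {m : ℕ} (g : Fin m → Fin n × ℝ) (i : Fin n) (s t : ℝ), s < t →
    (∀ l, (g l).1 = i → (g l).2 ≤ s ∨ t ≤ (g l).2) → ImmAfter (e ∘ g) (e (i, s)) (e (i, t))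

lemma exists_isThickening {n : ℕ} {p : Fin n → OneMfld b c} (hp : Injective p) :
    ∃ e, IsThickening p e := by
  have h : ∀ᶠ z : ℝ × ℝ in 𝓝 (0, 0), ∀ i j, i ≠ j → shiftPt z.1 (p i) ≠ shiftPt z.2 (p j) := by
    rw [eventually_all]
    intro i
    rw [eventually_all]
    intro j
    by_cases hij : i = j
    · simp [hij]
    · have h₁ : Continuous fun z : ℝ × ℝ => shiftPt z.1 (p i) :=
        (continuous_shiftPt (p i)).comp continuous_fst
      have h₂ : Continuous fun z : ℝ × ℝ => shiftPt z.2 (p j) :=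
        (continuous_shiftPt (p j)).comp continuous_snd
      have h₀ : ((0, 0) : ℝ × ℝ) ∈ {z : ℝ × ℝ | shiftPt z.1 (p i) ≠ shiftPt z.2 (p j)} := by
        simpa [shiftPt_zero] using hp.ne hij
      filter_upwards [(isOpen_ne_fun h₁ h₂).mem_nhds h₀] with z hz _ using hz
  obtain ⟨ε, hε, h⟩ := Metric.eventually_nhds_iff_ball.1 h
  obtain ⟨φ, hφ, hφ0, hφb⟩ : ∃ φ : ℝ → ℝ, StrictMono φ ∧ φ 0 = 0 ∧
      ∀ t, |φ t| < min ε 1 := by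
    have hm : 0 < min ε 1 := lt_min hε one_pos
    refine ⟨fun t => min ε 1 / 2 * arctan t, fun s t hst => ?_, by simp, fun t => ?_⟩
    · exact mul_lt_mul_of_pos_left (arctan_strictMono hst) (by linarith)
    · have : |arctan t| < 2 := by
        rw [abs_lt]
        constructor <;> linarith [neg_pi_div_two_lt_arctan t, arctan_lt_pi_div_two t, pi_lt_four]
      rw [abs_mul, abs_of_pos (by linarith)]
      nlinarith
  have hφε : ∀ t, |φ t| < ε := fun t => (hφb t).trans_le (min_le_left _ _)
  have hφ1 : ∀ t, |φ t| < 1 := fun t => (hφb t).trans_le (min_le_right _ _)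
  have key : ∀ i j s t, |s| < ε → |t| < ε → |s| < 1 → |t| < 1 →
      shiftPt s (p i) = shiftPt t (p j) → i = j ∧ s = t := by
    intro i j s t hs ht hs1 ht1 hst
    have hij : i = j := by
      by_contra hij
      refine h (s, t) ?_ i j hij hst
      simp [Prod.dist_eq, hs, ht]
    subst hij
    exact ⟨rfl, shiftPt_inj hs1 ht1 hst⟩
  refine ⟨fun z => shiftPt (φ z.2) (p z.1), ?_, fun i => ?_, ?_⟩
  · rintro ⟨i, s⟩ ⟨j, t⟩ hst
    obtain ⟨rfl, hst'⟩ := key i j _ _ (hφε s) (hφε t) (hφ1 s) (hφ1 t) hst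
    rw [hφ.injective hst']
  · simp [hφ0, shiftPt_zero]
  · intro m g i s t hst hg
    refine ⟨fun heq => ?_, fun l hl => ?_, ?_⟩
    · exact hst.ne' (hφ.injective (key i i _ _ (hφε t) (hφε s) (hφ1 t) (hφ1 s) heq).2)
    · obtain ⟨r, hr₁, hr₂, hr⟩ := exists_shiftPt_of_sBtwn (hφ1 s) (hφ1 t) (hφ hst) hl
      have hs := abs_lt.1 (hφb s)
      have ht := abs_lt.1 (hφb t)
      have hrb : |r| < min ε 1 := abs_lt.2 ⟨by linarith, by linarith⟩
      obtain ⟨hi, hr⟩ := key _ _ _ _ (hφε _) (hrb.trans_le (min_le_left _ _)) (hφ1 _)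
        (hrb.trans_le (min_le_right _ _)) hr
      rw [← hr] at hr₁ hr₂
      rcases hg l hi with h | h
      · exact absurd (hφ.lt_iff_lt.1 hr₁) h.not_gt
      · exact absurd (hφ.lt_iff_lt.1 hr₂) h.not_gt
    · rcases hpi : p i with ⟨k, u⟩ | ⟨k, u⟩ <;>
        simp [shiftPt, hφ hst]

end Geometry

section Cofaces

variable {b c : ℕ}

lemma Fin.succAbove_succ_succAbove {m : ℕ} {i j : Fin (m + 1)} (h : i ≤ j) (l : Fin m) :
    j.succ.succAbove (i.succAbove l) = i.castSucc.succAbove (j.succAbove l) := by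
  simp only [Fin.succAbove, Fin.lt_def, Fin.le_def, Fin.ext_iff] at *
  split_ifs <;> simp at * <;> omega

lemma Fin.insertNth_succ_insertNth {α : Type*} {m : ℕ} {i j : Fin (m + 1)} (h : i ≤ j) (x y : α)
    (g : Fin m → α) :
    (j.succ.insertNth y (i.insertNth x g : Fin (m + 1) → α) : Fin (m + 2) → α) =
      i.castSucc.insertNth x (j.insertNth y g : Fin (m + 1) → α) := by
  have h₁ : j.succ = i.castSucc.succAbove j := by
    rw [Fin.succAbove_of_le_castSucc _ _ (Fin.castSucc_le_castSucc_iff.2 h)]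
  have h₂ : i.castSucc = j.succ.succAbove i := by
    rw [Fin.succAbove_of_castSucc_lt _ _ (Fin.castSucc_lt_succ_iff.2 h)]
  rw [Fin.insertNth_eq_iff]
  constructor
  · conv_rhs => rw [h₁, Fin.insertNth_apply_succAbove, Fin.insertNth_apply_same]
  · rw [Fin.insertNth_eq_iff]
    constructor
    · rw [Fin.removeNth, ← h₂, Fin.insertNth_apply_same]
    · ext l
      rw [Fin.removeNth, Fin.removeNth, Fin.succAbove_succ_succAbove h,
        Fin.insertNth_apply_succAbove, Fin.insertNth_apply_succAbove]

lemma Fin.insertNth_injective_of_ne {α : Type*} {m : ℕ} (i : Fin (m + 1)) {x : α} {g : Fin m → α}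
    (hg : Injective g) (hx : ∀ l, g l ≠ x) :
    Injective (i.insertNth x g : Fin (m + 1) → α) := by
  intro k l
  induction k using i.succAboveCases <;> induction l using i.succAboveCases <;>
    simp [(hx _).symm, hx, hg.eq_iff]

/-- The maps `d` are the point doubling cofaces. -/
structure IsDoubling (d : ∀ q : ℕ, Fin (q + 2) → Kconf b c (q + 1) → Kconf b c (q + 2)) :
    Prop where
  right : ∀ (q : ℕ) (i : Fin (q + 1)) (p : Config b c (q + 1)) (p' : Config b c (q + 2)),
    p'.1 ∘ Fin.succAbove (i.succ : Fin (q + 2)) = p.1 →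
    ImmAfter p'.1 (p.1 i) (p'.1 (i.succ : Fin (q + 2))) →
    d q i.castSucc (ConnectedComponents.mk p) = ConnectedComponents.mk p'
  left : ∀ (q : ℕ) (p : Config b c (q + 1)) (p' : Config b c (q + 2)),
    p'.1 ∘ Fin.castSucc = p.1 →
    ImmAfter p'.1 (p'.1 (Fin.last (q + 1))) (p.1 0) →
    d q (Fin.last (q + 1)) (ConnectedComponents.mk p) = ConnectedComponents.mk p'

/-- Forgetting the point with index `r`. -/
def forgetPt {m : ℕ} (r : Fin (m + 1)) (p : Config b c (m + 1)) : Config b c m :=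
  ⟨p.1 ∘ r.succAbove, p.2.comp Fin.succAbove_right_injective⟩

lemma continuous_forgetPt {m : ℕ} (r : Fin (m + 1)) :
    Continuous (forgetPt r : Config b c (m + 1) → Config b c m) := by
  refine Continuous.subtype_mk (continuous_pi fun l => ?_) _
  exact (continuous_apply (r.succAbove l)).comp continuous_subtype_val

/-- The map induced on components by forgetting the point with index `r`. -/
noncomputable def forgetK {m : ℕ} (r : Fin (m + 1)) : Kconf b c (m + 1) → Kconf b c m :=
  (ConnectedComponents.continuous_coe.comp (continuous_forgetPt r)).connectedComponentsLift

lemma forgetK_mk {m : ℕ} (r : Fin (m + 1)) (p : Config b c (m + 1)) :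
    forgetK r (ConnectedComponents.mk p) = ConnectedComponents.mk (forgetPt r p) := rfl

/-- The component of a 1-manifold containing a given point. -/
def componentPt : OneMfld b c → Fin b ⊕ Fin c := Sum.map Prod.fst Prod.fst

lemma continuous_componentPt : Continuous (componentPt : OneMfld b c → Fin b ⊕ Fin c) :=
  Continuous.sumMap continuous_fst continuous_fst

lemma componentPt_eq_inl_iff {x : OneMfld b c} {k : Fin b} :
    componentPt x = Sum.inl k ↔ ∃ u, x = Sum.inl (k, u) := by
  rcases x with ⟨l, u⟩ | ⟨l, u⟩ <;> simp [componentPt]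

lemma ImmAfter.componentPt_eq {m : ℕ} {S : Fin m → OneMfld b c} {u x : OneMfld b c}
    (h : ImmAfter S u x) : componentPt u = componentPt x := by
  have h := h.2.2
  rcases u with ⟨k, u⟩ | ⟨k, u⟩ <;> rcases x with ⟨l, x⟩ | ⟨l, x⟩ <;>
    simp_all [componentPt]

lemma completeConf_mk_iff {q : ℕ} (p : Config b c q) :
    CompleteConf (ConnectedComponents.mk p) ↔ ∀ k, ∃ j, componentPt (p.1 j) = Sum.inl k := by
  simp only [componentPt_eq_inl_iff]
  constructor
  · rintro ⟨p', hp', h⟩ k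
    have hc : Continuous fun p : Config b c q => componentPt ∘ p.1 :=
      continuous_pi fun l =>
        continuous_componentPt.comp ((continuous_apply l).comp continuous_subtype_val)
    have he : componentPt ∘ p'.1 = componentPt ∘ p.1 :=
      congrArg hc.connectedComponentsLift hp'
    obtain ⟨j, hj⟩ := h k
    exact ⟨j, componentPt_eq_inl_iff.1
      ((congrFun he j).symm.trans (componentPt_eq_inl_iff.2 hj))⟩
  · exact fun h => ⟨p, rfl, h⟩

/-- The configuration described by coordinates in a thickening. -/
def IsThickening.conf {n m : ℕ} {p : Fin n → OneMfld b c} {e : Fin n × ℝ → OneMfld b c}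
    (he : IsThickening p e) (g : Fin m → Fin n × ℝ) (hg : Injective g) : Config b c m :=
  ⟨e ∘ g, he.injective.comp hg⟩

lemma exists_thickened_conf {n : ℕ} (x : Kconf b c n) :
    ∃ (p : Fin n → OneMfld b c) (e : Fin n × ℝ → OneMfld b c) (he : IsThickening p e)
      (hg : Injective fun l : Fin n => (l, (0 : ℝ))),
      x = ConnectedComponents.mk (he.conf (fun l => (l, 0)) hg) := by
  obtain ⟨p, rfl⟩ := ConnectedComponents.surjective_coe x
  obtain ⟨e, he⟩ := exists_isThickening p.2
  refine ⟨p.1, e, he, fun k l h => congrArg Prod.fst h, ?_⟩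
  congr 1
  ext l
  exact (he.zero l).symm

namespace IsDoubling

variable {d : ∀ q : ℕ, Fin (q + 2) → Kconf b c (q + 1) → Kconf b c (q + 2)} (hd : IsDoubling d)
include hd

lemma right_conf {n m : ℕ} {p : Fin n → OneMfld b c} {e : Fin n × ℝ → OneMfld b c}
    (he : IsThickening p e) {g : Fin (m + 1) → Fin n × ℝ} (hg : Injective g) (i : Fin (m + 1))
    {k : Fin n} {s : ℝ} (hi : g i = (k, s)) (t : ℝ) (hst : s < t)
    (h : ∀ l, (g l).1 = k → (g l).2 ≤ s ∨ t < (g l).2) :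
    ∃ hg' : Injective (i.succ.insertNth (k, t) g : Fin (m + 2) → Fin n × ℝ),
      d m i.castSucc (ConnectedComponents.mk (he.conf g hg)) =
        ConnectedComponents.mk (he.conf _ hg') ∧
      ImmAfter (he.conf _ hg').1 ((he.conf g hg).1 i) ((he.conf _ hg').1 i.succ) := by
  have hg' : Injective (i.succ.insertNth (k, t) g : Fin (m + 2) → Fin n × ℝ) := by
    refine Fin.insertNth_injective_of_ne _ hg fun l hl => ?_
    have := h l (by rw [hl])
    rw [hl] at this
    rcases this with h | h
    · exact h.not_gt hst
    · exact lt_irrefl _ h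
  have hI : ImmAfter (he.conf _ hg').1 ((he.conf g hg).1 i) ((he.conf _ hg').1 i.succ) := by
    simp only [IsThickening.conf, comp_apply, hi, Fin.insertNth_apply_same]
    refine he.immAfter _ k s t hst ?_
    rw [Fin.forall_iff_succAbove i.succ]
    simp only [Fin.insertNth_apply_same, Fin.insertNth_apply_succAbove]
    exact ⟨fun _ => Or.inr le_rfl, fun l hl => (h l hl).imp id le_of_lt⟩
  refine ⟨hg', hd.right m i _ _ ?_ hI, hI⟩
  simp [IsThickening.conf, comp_assoc]

lemma left_conf {n m : ℕ} {p : Fin n → OneMfld b c} {e : Fin n × ℝ → OneMfld b c}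
    (he : IsThickening p e) {g : Fin (m + 1) → Fin n × ℝ} (hg : Injective g)
    {k : Fin n} {t : ℝ} (hi : g 0 = (k, t)) (s : ℝ) (hst : s < t)
    (h : ∀ l, (g l).1 = k → (g l).2 < s ∨ t ≤ (g l).2) :
    ∃ hg' : Injective ((Fin.last (m + 1)).insertNth (k, s) g : Fin (m + 2) → Fin n × ℝ),
      d m (Fin.last (m + 1)) (ConnectedComponents.mk (he.conf g hg)) =
        ConnectedComponents.mk (he.conf _ hg') := by
  have hg' : Injective ((Fin.last (m + 1)).insertNth (k, s) g : Fin (m + 2) → Fin n × ℝ) := by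
    refine Fin.insertNth_injective_of_ne _ hg fun l hl => ?_
    have := h l (by rw [hl])
    rw [hl] at this
    rcases this with h | h
    · exact lt_irrefl _ h
    · exact h.not_gt hst
  refine ⟨hg', hd.left m _ _ ?_ ?_⟩
  · rw [← Fin.succAbove_last]
    simp only [IsThickening.conf, comp_assoc, Fin.insertNth_comp_succAbove]
  · simp only [IsThickening.conf, comp_apply, hi, Fin.insertNth_apply_same]
    refine he.immAfter _ k s t hst ?_
    rw [Fin.forall_iff_succAbove (Fin.last (m + 1))]
    simp only [Fin.insertNth_apply_same, Fin.insertNth_apply_succAbove]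
    exact ⟨fun _ => Or.inl le_rfl, fun l hl => (h l hl).imp le_of_lt id⟩

lemma exists_right {n : ℕ} (i : Fin (n + 1)) (x : Kconf b c (n + 1)) :
    ∃ (p : Config b c (n + 1)) (p' : Config b c (n + 2)), x = ConnectedComponents.mk p ∧
      d n i.castSucc x = ConnectedComponents.mk p' ∧ forgetPt i.succ p' = p ∧
      ImmAfter p'.1 (p.1 i) (p'.1 i.succ) := by
  obtain ⟨p, e, he, hg, rfl⟩ := exists_thickened_conf x
  obtain ⟨hg', h, hI⟩ := hd.right_conf he hg i rfl 1 one_pos (by simp)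
  refine ⟨_, _, rfl, h, Subtype.ext ?_, hI⟩
  simp [IsThickening.conf, forgetPt, comp_assoc]

lemma forgetK_right {n : ℕ} (i : Fin (n + 1)) (x : Kconf b c (n + 1)) :
    forgetK i.succ (d n i.castSucc x) = x := by
  obtain ⟨p, p', rfl, h, hp, -⟩ := hd.exists_right i x
  rw [h, forgetK_mk, hp]

lemma forgetK_left {n : ℕ} (x : Kconf b c (n + 1)) :
    forgetK (Fin.last (n + 1)) (d n (Fin.last (n + 1)) x) = x := by
  obtain ⟨p, e, he, hg, rfl⟩ := exists_thickened_conf x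
  obtain ⟨hg', h⟩ := hd.left_conf he hg rfl (-1) (by norm_num) (by simp)
  rw [h, forgetK_mk]
  congr 1
  refine Subtype.ext ?_
  simp only [IsThickening.conf, forgetPt, comp_assoc, Fin.insertNth_comp_succAbove]

lemma injective_zero (n : ℕ) : Injective (d n 0) :=
  LeftInverse.injective (g := forgetK (0 : Fin (n + 1)).succ) (hd.forgetK_right 0)

lemma completeConf_of_zero {n : ℕ} {x : Kconf b c (n + 1)} (h : CompleteConf (d n 0 x)) :
    CompleteConf x := by
  obtain ⟨p, p', rfl, hp', rfl, hI⟩ := hd.exists_right 0 x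
  rw [Fin.castSucc_zero] at hp'
  rw [hp', completeConf_mk_iff] at h
  rw [completeConf_mk_iff]
  intro k
  obtain ⟨j, hj⟩ := h k
  rcases Fin.eq_self_or_eq_succAbove (0 : Fin (n + 1)).succ j with rfl | ⟨l, rfl⟩
  · exact ⟨0, hI.componentPt_eq.trans hj⟩
  · exact ⟨l, hj⟩

lemma exists_forgetK_succ {n : ℕ} (j : Fin (n + 2)) :
    ∃ k : Fin (n + 1), ∀ x, forgetK k.succ.succ (d (n + 1) j.succ x) = x := by
  induction j using Fin.lastCases with
  | last => exact ⟨Fin.last n, fun x => by simpa using hd.forgetK_left x⟩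
  | cast k => exact ⟨k, fun x => hd.forgetK_right k.succ x⟩

lemma forgetK_zero {n : ℕ} (k : Fin (n + 1)) (z : Kconf b c (n + 2)) :
    forgetK k.succ.succ (d (n + 1) 0 z) = d n 0 (forgetK k.succ z) := by
  obtain ⟨p, p', rfl, hp', rfl, hI⟩ := hd.exists_right 0 z
  rw [Fin.castSucc_zero] at hp'
  rw [hp', forgetK_mk, forgetK_mk]
  symm
  have hz : k.succ.succAbove 0 = 0 := Fin.succ_succAbove_zero k
  have ho : k.succ.succ.succAbove (0 : Fin (n + 1)).succ = (0 : Fin (n + 2)).succ := by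
    rw [Fin.succ_succAbove_succ, hz]
  refine hd.right n 0 _ _ ?_ ⟨?_, ?_, ?_⟩
  · ext l
    have := Fin.succAbove_succ_succAbove (i := (0 : Fin (n + 1)).succ) (j := k.succ)
      (Fin.succ_le_succ_iff.2 (Fin.zero_le k)) l
    simp only [forgetPt, comp_apply, this]
    rfl
  all_goals simp only [forgetPt, comp_apply, hz, ho]
  · exact hI.1
  · exact fun l => hI.2.1 _
  · exact hI.2.2

lemma mem_range_zero {n : ℕ} {j : Fin (n + 2)} {x : Kconf b c (n + 2)}
    (h : d (n + 1) j.succ x ∈ Set.range (d (n + 1) 0)) : x ∈ Set.range (d n 0) := by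
  obtain ⟨z, hz⟩ := h
  obtain ⟨k, hk⟩ := hd.exists_forgetK_succ j
  exact ⟨forgetK k.succ z, by rw [← hd.forgetK_zero, hz, hk]⟩

lemma eq_of_mem_range {x : Kconf b c 1} (h : d 0 1 x ∈ Set.range (d 0 0)) :
    d 0 0 x = d 0 1 x := by
  obtain ⟨z, hz⟩ := h
  have h₁ : forgetK 1 (d 0 0 z) = z := hd.forgetK_right 0 z
  have h₂ : forgetK 1 (d 0 1 x) = x := hd.forgetK_left x
  rw [hz, h₂] at h₁
  rw [← hz, ← h₁]

lemma comm {n : ℕ} {i j : Fin (n + 2)} (hij : i ≤ j) (x : Kconf b c (n + 1)) :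
    d (n + 1) j.succ (d n i x) = d (n + 1) i.castSucc (d n j x) := by
  obtain ⟨p, e, he, hg, rfl⟩ := exists_thickened_conf x
  induction i using Fin.lastCases with
  | last =>
    obtain rfl : j = Fin.last (n + 1) := Fin.last_le_iff.1 hij
    obtain ⟨hg₁, h₁⟩ := hd.left_conf he hg rfl (-2) (by norm_num) (by simp)
    rw [h₁]
    obtain ⟨hg₂, h₂⟩ := hd.left_conf he hg₁ (k := 0) (t := 0)
      (by rw [Fin.insertNth_last', Fin.snoc_apply_zero]) (-1) (by norm_num) (by
        rw [Fin.forall_iff_succAbove (Fin.last (n + 1))]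
        simp only [Fin.insertNth_apply_same, Fin.insertNth_apply_succAbove]
        norm_num)
    obtain ⟨hg₃, h₃, -⟩ := hd.right_conf he hg₁ (Fin.last (n + 1)) (k := 0) (s := -2)
      (by rw [Fin.insertNth_apply_same]) (-1) (by norm_num) (by
        rw [Fin.forall_iff_succAbove (Fin.last (n + 1))]
        simp only [Fin.insertNth_apply_same, Fin.insertNth_apply_succAbove]
        norm_num)
    rw [h₃]
    exact h₂
  | cast i =>
    obtain ⟨hg₁, h₁, -⟩ := hd.right_conf he hg i rfl 1 one_pos (by simp)
    rw [h₁]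
    induction j using Fin.lastCases with
    | last =>
      obtain ⟨hg₂, h₂⟩ := hd.left_conf he hg₁ (k := 0) (t := 0) (by
          conv_lhs => rw [← Fin.succ_succAbove_zero i, Fin.insertNth_apply_succAbove]) (-1)
        (by norm_num) (by
          rw [Fin.forall_iff_succAbove i.succ]
          simp only [Fin.insertNth_apply_same, Fin.insertNth_apply_succAbove]
          norm_num)
      obtain ⟨hg₃, h₃⟩ := hd.left_conf he hg rfl (-1) (by norm_num) (by simp)
      obtain ⟨hg₄, h₄, -⟩ := hd.right_conf he hg₃ i.castSucc (k := i) (s := 0) (by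
          conv_lhs => rw [← Fin.succAbove_last_apply, Fin.insertNth_apply_succAbove]) 1
        (by norm_num) (by
          rw [Fin.forall_iff_succAbove (Fin.last (n + 1))]
          simp only [Fin.insertNth_apply_same, Fin.insertNth_apply_succAbove]
          norm_num)
      rw [h₃, h₄]
      refine h₂.trans ?_
      congr 2
      exact Fin.insertNth_succ_insertNth (Fin.le_last i.succ) _ _ _
    | cast j =>
      have hij : i ≤ j := hij
      obtain ⟨s, hs0, hs, hs'⟩ : ∃ s : ℝ, 0 ≤ s ∧ (i = j → s = 1) ∧ (i ≠ j → s = 0) := by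
        by_cases h : i = j
        · exact ⟨1, by simp [h]⟩
        · exact ⟨0, by simp [h]⟩
      obtain ⟨hg₂, h₂, -⟩ := hd.right_conf he hg₁ j.succ (k := j) (s := s) (by
          rcases hij.eq_or_lt with rfl | h
          · rw [Fin.insertNth_apply_same, hs rfl]
          · have : j.succ = i.succ.succAbove j := by
              rw [Fin.succAbove_of_le_castSucc _ _ (Fin.succ_le_castSucc_iff.2 h)]
            conv_lhs => rw [this, Fin.insertNth_apply_succAbove]
            rw [hs' h.ne]) (s + 1)
        (by linarith) (by
          rw [Fin.forall_iff_succAbove i.succ]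
          simp only [Fin.insertNth_apply_same, Fin.insertNth_apply_succAbove]
          exact ⟨fun h => Or.inl (hs h).ge, fun l _ => Or.inl hs0⟩)
      obtain ⟨hg₃, h₃, -⟩ := hd.right_conf he hg j rfl (s + 1) (by linarith) (by simp)
      obtain ⟨hg₄, h₄, -⟩ := hd.right_conf he hg₃ i.castSucc (k := i) (s := 0) (by
          have : i.castSucc = j.succ.succAbove i := by
            rw [Fin.succAbove_of_castSucc_lt _ _ (Fin.castSucc_lt_succ_iff.2 hij)]
          conv_lhs => rw [this, Fin.insertNth_apply_succAbove]) 1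
        (by norm_num) (by
          rw [Fin.forall_iff_succAbove j.succ]
          simp only [Fin.insertNth_apply_same, Fin.insertNth_apply_succAbove]
          exact ⟨fun h => Or.inr (by linarith [hs h.symm]), fun l _ => Or.inl le_rfl⟩)
      rw [h₃, h₄]
      refine h₂.trans ?_
      congr 2
      exact Fin.insertNth_succ_insertNth (Fin.succ_le_succ_iff.2 hij) _ _ _

/-- The doubling cofaces on complete configurations form a coface system. -/
lemma cofaceSystem (hc : ∀ (q : ℕ) (i : Fin (q + 2)) (x : Kconf b c (q + 1)),
      CompleteConf x → CompleteConf (d q i x)) :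
    CofaceSystem (C := fun n => KconfC b c (n + 1))
      (fun n i x => ⟨d n i x.1, hc n i x.1 x.2⟩) where
  comm _ _ _ hij x := Subtype.ext (hd.comm hij x.1)
  injective_zero n x y h := Subtype.ext (hd.injective_zero n (congrArg Subtype.val h))
  mem_range_zero n j x h := by
    obtain ⟨z, hz⟩ := h
    obtain ⟨w, hw⟩ := hd.mem_range_zero ⟨z.1, congrArg Subtype.val hz⟩
    exact ⟨⟨w, hd.completeConf_of_zero (hw ▸ x.2)⟩, Subtype.ext hw⟩
  eq_of_mem_range x h := by
    obtain ⟨z, hz⟩ := h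
    exact Subtype.ext (hd.eq_of_mem_range ⟨z.1, congrArg Subtype.val hz⟩)

end IsDoubling

instance : Subsingleton (Kconf 1 0 1) := by
  have hs : Surjective fun t : ℝ => (⟨fun _ => Sum.inl (0, (t : Real.Angle)),
      injective_of_subsingleton _⟩ : Config 1 0 1) := by
    intro p
    rcases h : p.1 0 with ⟨k, u⟩ | ⟨k, u⟩
    · induction u using Real.Angle.induction_on with
      | _ t =>
      refine ⟨t, Subtype.ext (funext fun l => ?_)⟩
      rw [Fin.fin_one_eq_zero l, h, Fin.fin_one_eq_zero k]
    · exact k.elim0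
  have hcont : Continuous fun t : ℝ => (⟨fun _ => Sum.inl (0, (t : Real.Angle)),
      injective_of_subsingleton _⟩ : Config 1 0 1) := by
    fun_prop
  have := hs.connectedSpace hcont
  infer_instance

lemma IsDoubling.zero_eq_one
    {d : ∀ q : ℕ, Fin (q + 2) → Kconf 1 0 (q + 1) → Kconf 1 0 (q + 2)} (hd : IsDoubling d)
    (x : Kconf 1 0 1) : d 0 0 x = d 0 1 x := by
  obtain ⟨p, p', rfl, hp', rfl, hI⟩ := hd.exists_right 0 x
  rw [Fin.castSucc_zero] at hp'
  rw [hp']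
  refine (hd.left 0 _ p' ?_ ?_).symm
  · ext l
    rw [Fin.fin_one_eq_zero l]
    rfl
  · rcases h₀ : p'.1 0 with ⟨k, u⟩ | ⟨k, u⟩
    · rcases h₁ : p'.1 1 with ⟨l, v⟩ | ⟨l, v⟩
      · obtain rfl := Subsingleton.elim k l
        have hl : p'.1 (Fin.last (0 + 1)) = Sum.inl (k, v) := h₁
        have hz : (forgetPt (0 : Fin 1).succ p').1 0 = Sum.inl (k, u) := h₀
        rw [hl, hz]
        refine ⟨?_, ?_, rfl⟩
        · rw [← h₀, ← h₁]
          exact p'.2.ne (by simp)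
        · rw [Fin.forall_fin_two, h₀, h₁]
          simp [SBtwn, sbtw_irrefl_left, sbtw_irrefl_right]
      · exact l.elim0
    · exact k.elim0

/-- If there are no intervals, a one-point configuration can only be complete if there is exactly
one circle. -/
lemma CompleteConf.eq_one {x : Kconf b 0 1} (hx : CompleteConf x) : b = 1 := by
  obtain ⟨p, rfl⟩ := ConnectedComponents.surjective_coe x
  have h := (completeConf_mk_iff p).1 hx
  rcases h₀ : componentPt (p.1 0) with k | k
  · have hk : ∀ l, k = l := fun l => by
      obtain ⟨j, hj⟩ := h l
      rw [Fin.fin_one_eq_zero j, h₀] at hj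
      exact Sum.inl.inj hj
    have := Fintype.card_eq_one_iff.2 ⟨k, fun l => (hk l).symm⟩
    simpa using this
  · exact k.elim0

lemma completeConf_one (x : Kconf 1 0 1) : CompleteConf x := by
  obtain ⟨p, rfl⟩ := ConnectedComponents.surjective_coe x
  rw [show ((p : Config 1 0 1) : Kconf 1 0 1) = ConnectedComponents.mk p from rfl,
    completeConf_mk_iff]
  intro k
  refine ⟨0, ?_⟩
  rcases h₀ : componentPt (p.1 0) with l | l
  · rw [Subsingleton.elim k l]
  · exact l.elim0

end Cofaces

theorem complete_configurations_homology (b c : ℕ)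
    (d : ∀ q : ℕ, Fin (q + 2) → Kconf b c (q + 1) → Kconf b c (q + 2))
    -- `d^i`, `0 ≤ i ≤ q`, doubles `p_i` to its right ...
    (hd₁ : ∀ (q : ℕ) (i : Fin (q + 1)) (p : Config b c (q + 1)) (p' : Config b c (q + 2)),
        p'.1 ∘ Fin.succAbove (i.succ : Fin (q + 2)) = p.1 →
        ImmAfter p'.1 (p.1 i) (p'.1 (i.succ : Fin (q + 2))) →
        d q i.castSucc (ConnectedComponents.mk p) = ConnectedComponents.mk p')
    -- ... and `d^{q+1}` doubles `p_0` to its left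
    (hd₂ : ∀ (q : ℕ) (p : Config b c (q + 1)) (p' : Config b c (q + 2)),
        p'.1 ∘ Fin.castSucc = p.1 →
        ImmAfter p'.1 (p'.1 (Fin.last (q + 1))) (p.1 0) →
        d q (Fin.last (q + 1)) (ConnectedComponents.mk p) = ConnectedComponents.mk p')
    -- the cofaces preserve completeness
    (hd : ∀ (q : ℕ) (i : Fin (q + 2)) (x : Kconf b c (q + 1)),
        CompleteConf x → CompleteConf (d q i x)) :
    -- the homology is concentrated in degree 0: exactness everywhere else
    (∀ q : ℕ,
        LinearMap.ker (diffKc d hd (q + 1)) = LinearMap.range (diffKc d hd q)) ∧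
    -- the degree-0 homology (the kernel of the first differential) is free with one
    -- generator for each single-point configuration `x` with `d^0 x = d^1 x`
    Nonempty (LinearMap.ker (diffKc d hd 0) ≃ₗ[ℤ]
      ({x : KconfC b c 1 // d 0 0 x.1 = d 0 1 x.1} →₀ ℤ)) ∧
    -- if `X` consists of circles only, the degree-0 homology is free of rank 1 when
    -- `b = 1` and vanishes when `b ≠ 1`
    (c = 0 → b = 1 → Nonempty (LinearMap.ker (diffKc d hd 0) ≃ₗ[ℤ] ℤ)) ∧
    (c = 0 → b ≠ 1 → LinearMap.ker (diffKc d hd 0) = ⊥) := by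
  have hD : IsDoubling d := ⟨hd₁, hd₂⟩
  have H := hD.cofaceSystem hd
  have hker : LinearMap.ker (diffKc d hd 0) =
      Finsupp.supported ℤ ℤ {x : KconfC b c 1 | d 0 0 x.1 = d 0 1 x.1} := by
    refine H.ker_zero_eq.trans ?_
    simp only [Subtype.mk.injEq]
  let E : LinearMap.ker (diffKc d hd 0) ≃ₗ[ℤ]
      ({x : KconfC b c 1 // d 0 0 x.1 = d 0 1 x.1} →₀ ℤ) :=
    (LinearEquiv.ofEq _ _ hker).trans (Finsupp.supportedEquivFinsupp _)
  refine ⟨H.ker_eq_range, ⟨E⟩, ?_, ?_⟩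
  · rintro rfl rfl
    let x₀ : Kconf 1 0 1 := ConnectedComponents.mk
      ⟨fun _ => Sum.inl (0, 0), injective_of_subsingleton _⟩
    exact ⟨E.trans (Finsupp.uniqueLinearEquiv ℤ ℤ
      ⟨⟨x₀, completeConf_one x₀⟩, hD.zero_eq_one x₀⟩)⟩
  · rintro rfl hb
    have hempty : {x : KconfC b 0 1 | d 0 0 x.1 = d 0 1 x.1} = ∅ :=
      Set.eq_empty_of_forall_notMem fun x _ => hb x.2.eq_one
    rw [hker, hempty, Finsupp.supported_empty]
end
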